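/- (Prolate spheroidal single layer potential, interior evaluation.) Fix a > 0, u₀ > 1, and integers n ≥ 0, 0 ≤ m ≤ n. Let the density be σ(s,t) = Y_n^m(s,t)/√(u₀^2−s^2). Then for every interior target point x = Φ(u,v,φ) with 1 < u < u₀, v ∈ (−1,1), φ ∈ ℝ, the single layer potential satisfies S[σ](x) = a·((n−m)!/(n+m)!)·(−1)^m·√(u₀^2−1)·Q_n^m(u₀)·P_n^m(u)·Y_n^m(v,φ). -/

import Mathlib

noncomputable section

open Real MeasureTheory

/-- Legendre polynomial via Rodrigues' formula. -/
def legendreP (n : ℕ) (x : ℝ) : ℝ :=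
  (1 / (2 ^ n * (n.factorial : ℝ))) * iteratedDeriv n (fun y : ℝ => (y ^ 2 - 1) ^ n) x

/-- Legendre function of the second kind (Neumann's integral), for `x > 1`. -/
def legendreQ (n : ℕ) (x : ℝ) : ℝ :=
  (1 / 2) * ∫ t in (-1 : ℝ)..1, legendreP n t / (x - t)

/-- Associated Legendre function of the first kind, off the cut (`x > 1`). -/
def assocP (n m : ℕ) (x : ℝ) : ℝ :=
  Real.sqrt (x ^ 2 - 1) ^ m * iteratedDeriv m (legendreP n) x

/-- Associated Legendre function of the second kind, off the cut (`x > 1`). -/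
def assocQ (n m : ℕ) (x : ℝ) : ℝ :=
  Real.sqrt (x ^ 2 - 1) ^ m * iteratedDeriv m (legendreQ n) x

/-- Ferrers function of the first kind, on the cut (`-1 ≤ v ≤ 1`). -/
def ferrersP (n m : ℕ) (v : ℝ) : ℝ :=
  Real.sqrt (1 - v ^ 2) ^ m * iteratedDeriv m (legendreP n) v

/-- Prolate spheroidal coordinate map. -/
def prolate (a u v φ : ℝ) : EuclideanSpace ℝ (Fin 3) :=
  (WithLp.equiv 2 (Fin 3 → ℝ)).symm
    ![a * Real.sqrt (u ^ 2 - 1) * Real.sqrt (1 - v ^ 2) * Real.cos φ,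
      a * Real.sqrt (u ^ 2 - 1) * Real.sqrt (1 - v ^ 2) * Real.sin φ,
      a * u * v]

/-- Surface spheroidal (= spherical) harmonic `Y_n^m(v, φ)`. -/
def sphY (n m : ℕ) (v φ : ℝ) : ℂ :=
  ((Real.sqrt ((2 * (n : ℝ) + 1) / (4 * Real.pi)) *
      Real.sqrt (((n - m).factorial : ℝ) / ((n + m).factorial : ℝ)) * ferrersP n m v : ℝ) : ℂ) *
    Complex.exp (Complex.I * m * φ)

/-- Outward unit normal on the prolate spheroid `u = u₀`, at surface parameters `(s, t)`. -/
def unitNormalP (a u₀ s t : ℝ) : EuclideanSpace ℝ (Fin 3) :=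
  ‖deriv (fun w => prolate a w s t) u₀‖⁻¹ • deriv (fun w => prolate a w s t) u₀

/-- Surface area element on the prolate spheroid `u = u₀`. -/
def areaElemP (a u₀ s : ℝ) : ℝ := a ^ 2 * Real.sqrt (u₀ ^ 2 - s ^ 2) * Real.sqrt (u₀ ^ 2 - 1)

/-- Laplace single layer potential on the prolate spheroid `u = u₀`. -/
def singleLayerP (a u₀ : ℝ) (σ : ℝ → ℝ → ℂ) (x : EuclideanSpace ℝ (Fin 3)) : ℂ :=
  ∫ t in (0 : ℝ)..(2 * Real.pi), ∫ s in (-1 : ℝ)..1,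
    ((areaElemP a u₀ s / (4 * Real.pi * ‖x - prolate a u₀ s t‖) : ℝ) : ℂ) * σ s t

/-!
In the coordinates `u = cosh η`, `v = cos ψ` on the target and `u₀ = cosh ξ`, `s = cos θ` on the
surface, the factor `√(u₀² - s²)` of the area element cancels against the density, and the squared
distance divided by `a²` is the trigonometric polynomial `spheroidalDistSq`.

Integrating against `exp (i m t)` extracts the `m`-th cosine coefficient of the Newtonian kernel.
Trading `cos (m t)` for `sin t ^ (2 m)` by repeated integration by parts turns it into the potential
of a ring in dimension `2 m + 3`, which is annihilated by the separated Laplacian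
`sin θ · R_η + sinh η · R_θ`, where `R` denotes the radial operators `a f'' + k a' f'` for `k = 2 m`
and `a = sinh`, `a = sin`. The derivative `P_n^{(m)}` is an eigenfunction of both, so
integrating the ring potential against it gives a function of `(η, ψ)` which solves the
ultraspherical equation in each variable. Solutions regular at the singular point are unique up to
scale, hence the function is a multiple of `P_n^{(m)} (cosh η) P_n^{(m)} (cos ψ)`. The constant is
read off at `η = ψ = 0`, where the distance is `cosh ξ - cos θ`, and integration by parts turns the
remaining integral into `Q_n^{(m)} (u₀)`.
-/

section ParametricIntegral

open Function Set
open scoped Topology Interval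

universe w

variable {E F : Type w} [NormedAddCommGroup E] [NormedSpace ℝ E] [NormedAddCommGroup F]
  [NormedSpace ℝ F] {f : E → ℝ → F} {a b : ℝ} {x : E}

lemma eventually_forall_uIcc_contDiffAt {n : ℕ}
    (hf : ∀ t ∈ [[a, b]], ContDiffAt ℝ n (uncurry f) (x, t)) :
    ∀ᶠ y in 𝓝 x, ∀ t ∈ [[a, b]], ContDiffAt ℝ n (uncurry f) (y, t) :=
  isCompact_uIcc.eventually_forall_of_forall_eventually fun t ht => (hf t ht).eventually (by simp)

lemma continuousOn_uIcc_of_contDiffAt_zero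
    (hf : ∀ t ∈ [[a, b]], ContDiffAt ℝ 0 (uncurry f) (x, t)) : ContinuousOn (f x) [[a, b]] :=
  fun t ht => (ContinuousAt.comp (f := fun t => (x, t)) (hf t ht).continuousAt
    (by fun_prop)).continuousWithinAt

lemma exists_eventually_forall_uIcc_norm_le
    (hf : ∀ t ∈ [[a, b]], ContDiffAt ℝ 0 (uncurry f) (x, t)) :
    ∃ B, ∀ᶠ y in 𝓝 x, ∀ t ∈ [[a, b]], ‖f y t‖ ≤ B := by
  obtain ⟨B, hB⟩ := isCompact_uIcc.exists_bound_of_continuousOn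
    (continuousOn_uIcc_of_contDiffAt_zero hf)
  refine ⟨B + 1, isCompact_uIcc.eventually_forall_of_forall_eventually
    (P := fun y t => ‖f y t‖ ≤ B + 1) fun t ht => ?_⟩
  have hlt : ‖uncurry f (x, t)‖ < B + 1 := (hB t ht).trans_lt (lt_add_one B)
  filter_upwards [(hf t ht).continuousAt.norm.eventually_lt_const hlt] with z hz using hz.le

lemma eventually_aestronglyMeasurable_uIoc
    (hf : ∀ t ∈ [[a, b]], ContDiffAt ℝ 0 (uncurry f) (x, t)) :
    ∀ᶠ y in 𝓝 x, AEStronglyMeasurable (f y) (volume.restrict (Ι a b)) := by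
  filter_upwards [eventually_forall_uIcc_contDiffAt (n := 0) hf] with y hy
  exact ((continuousOn_uIcc_of_contDiffAt_zero hy).mono uIoc_subset_uIcc).aestronglyMeasurable
    measurableSet_uIoc

lemma continuousAt_intervalIntegral (hf : ∀ t ∈ [[a, b]], ContDiffAt ℝ 0 (uncurry f) (x, t)) :
    ContinuousAt (fun y => ∫ t in a..b, f y t) x := by
  obtain ⟨B, hB⟩ := exists_eventually_forall_uIcc_norm_le hf
  refine intervalIntegral.continuousAt_of_dominated_interval (bound := fun _ => B)
    (eventually_aestronglyMeasurable_uIoc hf) ?_ intervalIntegrable_const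
    (.of_forall fun t ht => ?_)
  · filter_upwards [hB] with y hy using .of_forall fun t ht => hy t (uIoc_subset_uIcc ht)
  · exact ContinuousAt.comp (f := fun y => (y, t)) (hf t (uIoc_subset_uIcc ht)).continuousAt
      (by fun_prop)

lemma contDiffAt_uncurry_fderiv_left {n : ℕ} {t : ℝ}
    (hf : ContDiffAt ℝ (n + 1) (uncurry f) (x, t)) :
    ContDiffAt ℝ n (uncurry fun y t => fderiv ℝ (f · t) y) (x, t) := by
  refine ContDiffAt.fderiv (f := fun (z : E × ℝ) y => f y z.2) (g := Prod.fst) (n := n + 1) ?_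
    contDiffAt_fst le_rfl
  exact ContDiffAt.comp (g := uncurry f) (f := fun p : (E × ℝ) × E => (p.2, p.1.2)) _ hf
    (by fun_prop)

lemma hasFDerivAt_intervalIntegral (hf : ∀ t ∈ [[a, b]], ContDiffAt ℝ 1 (uncurry f) (x, t)) :
    IntervalIntegrable (fun t => fderiv ℝ (f · t) x) volume a b ∧
      HasFDerivAt (fun y => ∫ t in a..b, f y t) (∫ t in a..b, fderiv ℝ (f · t) x) x := by
  have hf₀ : ∀ t ∈ [[a, b]], ContDiffAt ℝ 0 (uncurry f) (x, t) :=
    fun t ht => (hf t ht).of_le zero_le_one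
  have hf' : ∀ t ∈ [[a, b]], ContDiffAt ℝ 0 (uncurry fun y t => fderiv ℝ (f · t) y) (x, t) :=
    fun t ht => contDiffAt_uncurry_fderiv_left (n := 0) (by simpa using hf t ht)
  obtain ⟨B, hB⟩ := exists_eventually_forall_uIcc_norm_le hf'
  have hdiff : ∀ᶠ y in 𝓝 x, ∀ t ∈ [[a, b]], DifferentiableAt ℝ (f · t) y := by
    filter_upwards [eventually_forall_uIcc_contDiffAt (n := 1) hf] with y hy t ht
    exact ((hy t ht).differentiableAt one_ne_zero).comp (f := fun y => (y, t)) y (by fun_prop)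
  refine ⟨(continuousOn_uIcc_of_contDiffAt_zero hf').intervalIntegrable,
    intervalIntegral.hasFDerivAt_integral_of_dominated_of_fderiv_le (bound := fun _ => B)
      (hB.and hdiff) (eventually_aestronglyMeasurable_uIoc hf₀)
      (continuousOn_uIcc_of_contDiffAt_zero hf₀).intervalIntegrable
      (eventually_aestronglyMeasurable_uIoc hf').self_of_nhds
      (.of_forall fun t ht y hy => hy.1 t (uIoc_subset_uIcc ht)) intervalIntegrable_const
      (.of_forall fun t ht y hy => (hy.2 t (uIoc_subset_uIcc ht)).hasFDerivAt)⟩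

theorem contDiffAt_intervalIntegral {n : ℕ}
    (hf : ∀ t ∈ [[a, b]], ContDiffAt ℝ n (uncurry f) (x, t)) :
    ContDiffAt ℝ n (fun y => ∫ t in a..b, f y t) x := by
  induction n generalizing F with
  | zero =>
    refine contDiffAt_zero.2 ⟨_, eventually_forall_uIcc_contDiffAt hf, fun y hy => ?_⟩
    exact (continuousAt_intervalIntegral hy).continuousWithinAt
  | succ n ih =>
    refine contDiffAt_succ_iff_hasFDerivAt.2 ⟨fun y => ∫ t in a..b, fderiv ℝ (f · t) y,
      ⟨_, eventually_forall_uIcc_contDiffAt hf, fun y hy => ?_⟩,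
      ih fun t ht => contDiffAt_uncurry_fderiv_left (hf t ht)⟩
    exact (hasFDerivAt_intervalIntegral fun t ht => (hy t ht).of_le (by simp)).2

lemma hasDerivAt_intervalIntegral {f : ℝ → ℝ → ℝ} {x : ℝ}
    (hf : ∀ t ∈ [[a, b]], ContDiffAt ℝ 1 (uncurry f) (x, t)) :
    IntervalIntegrable (fun t => deriv (f · t) x) volume a b ∧
      HasDerivAt (fun y => ∫ t in a..b, f y t) (∫ t in a..b, deriv (f · t) x) x := by
  obtain ⟨hint, hderiv⟩ := hasFDerivAt_intervalIntegral hf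
  exact ⟨(intervalIntegrable_iff.2 ((intervalIntegrable_iff.1 hint).apply_continuousLinearMap 1)),
    by simpa [ContinuousLinearMap.intervalIntegral_apply hint] using hderiv.hasDerivAt⟩

end ParametricIntegral

section RadialOperator

open Function Set
open scoped Topology Interval

/-- The operator `f ↦ a⁻ᵏ (aᵏ⁺¹ f')'`. Separating the Laplace equation in spheroidal coordinates
produces it with `a = sin` in the polar angle and `a = sinh` in the radial variable. -/
def radialOp (k : ℕ) (a f : ℝ → ℝ) (x : ℝ) : ℝ :=
  a x * deriv (deriv f) x + (k + 1) * deriv a x * deriv f x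

variable {k : ℕ} {a f g : ℝ → ℝ} {x : ℝ}

lemma hasDerivAt_deriv_of_contDiffAt_two (hf : ContDiffAt ℝ 2 f x) :
    HasDerivAt (deriv f) (deriv (deriv f) x) x := by
  have hf' : ContDiffAt ℝ 1 (deriv f) x :=
    (hf.fderiv_right (m := 1) (by norm_num)).clm_apply contDiffAt_const
  exact (hf'.differentiableAt one_ne_zero).hasDerivAt

lemma radialOp_const_mul (c : ℝ) :
    radialOp k a (fun y => c * f y) x = c * radialOp k a f x := by
  simp only [radialOp, deriv_const_mul_field']
  ring

lemma radialOp_sub (hf : ContDiffAt ℝ 2 f x) (hg : ContDiffAt ℝ 2 g x) :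
    radialOp k a (fun y => f y - g y) x = radialOp k a f x - radialOp k a g x := by
  have hderiv : deriv (fun y => f y - g y) =ᶠ[𝓝 x] deriv f - deriv g := by
    filter_upwards [hf.eventually (by simp), hg.eventually (by simp)] with y hfy hgy
    exact deriv_sub (hfy.differentiableAt two_ne_zero) (hgy.differentiableAt two_ne_zero)
  have hderiv' :=
    (hasDerivAt_deriv_of_contDiffAt_two hf).sub (hasDerivAt_deriv_of_contDiffAt_two hg)
  rw [radialOp, hderiv.deriv_eq, hderiv.eq_of_nhds, hderiv'.deriv, radialOp, radialOp,
    Pi.sub_apply]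
  ring

lemma radialOp_rpow (hf : ContDiffAt ℝ 2 f x) (hpos : 0 < f x) (e : ℝ) :
    radialOp k a (fun y => f y ^ e) x =
      e * f x ^ (e - 2) * (f x * radialOp k a f x + (e - 1) * a x * deriv f x ^ 2) := by
  have hderiv : deriv (fun y => f y ^ e) =ᶠ[𝓝 x] fun y => deriv f y * e * f y ^ (e - 1) := by
    filter_upwards [hf.eventually (by simp), hf.continuousAt.eventually_const_lt hpos] with y hy hy₀
    exact ((hy.differentiableAt two_ne_zero).hasDerivAt.rpow_const (.inl hy₀.ne')).deriv
  have hderiv' := ((hasDerivAt_deriv_of_contDiffAt_two hf).mul_const e).fun_mul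
    ((hf.differentiableAt two_ne_zero).hasDerivAt.rpow_const (p := e - 1) (.inl hpos.ne'))
  have hpow : f x ^ (e - 1) = f x ^ (e - 2) * f x := by
    rw [← rpow_add_one hpos.ne']; ring_nf
  rw [radialOp, hderiv.deriv_eq, hderiv.eq_of_nhds, hderiv'.deriv, radialOp,
    show e - 1 - 1 = e - 2 by ring, hpow]
  ring

lemma radialOp_intervalIntegral {F : ℝ → ℝ → ℝ} {α β : ℝ}
    (hF : ∀ t ∈ [[α, β]], ContDiffAt ℝ 2 (uncurry F) (x, t)) :
    IntervalIntegrable (fun t => radialOp k a (F · t) x) volume α β ∧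
      radialOp k a (fun y => ∫ t in α..β, F y t) x = ∫ t in α..β, radialOp k a (F · t) x := by
  have hF' : ∀ t ∈ [[α, β]], ContDiffAt ℝ 1 (uncurry fun y t => deriv (F · t) y) (x, t) :=
    fun t ht => (contDiffAt_uncurry_fderiv_left (n := 1)
      (by simpa [one_add_one_eq_two] using hF t ht)).clm_apply contDiffAt_const
  have hderiv : deriv (fun y => ∫ t in α..β, F y t) =ᶠ[𝓝 x]
      fun y => ∫ t in α..β, deriv (F · t) y := by
    filter_upwards [eventually_forall_uIcc_contDiffAt (n := 2) hF] with y hy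
    exact (hasDerivAt_intervalIntegral fun t ht => (hy t ht).of_le one_le_two).2.deriv
  obtain ⟨hint, -⟩ := hasDerivAt_intervalIntegral fun t ht => (hF t ht).of_le one_le_two
  obtain ⟨hint', hderiv'⟩ := hasDerivAt_intervalIntegral hF'
  refine ⟨(hint'.const_mul _).add (hint.const_mul _), ?_⟩
  simp only [radialOp]
  rw [hderiv.deriv_eq, hderiv'.deriv, hderiv.eq_of_nhds, ← intervalIntegral.integral_const_mul,
    ← intervalIntegral.integral_const_mul, ← intervalIntegral.integral_add
      (hint'.const_mul _) (hint.const_mul _)]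

theorem integral_pow_mul_mul_radialOp_comm {α β : ℝ} (ha : ContDiff ℝ 1 a) (hα : a α = 0)
    (hβ : a β = 0) (hf : ContDiff ℝ 2 f) (hg : ContDiff ℝ 2 g) :
    ∫ x in α..β, a x ^ k * (g x * radialOp k a f x) =
      ∫ x in α..β, a x ^ k * (f x * radialOp k a g x) := by
  have hf' : ContDiff ℝ 1 (deriv f) := ContDiff.deriv' (n := 1) hf
  have hg' : ContDiff ℝ 1 (deriv g) := ContDiff.deriv' (n := 1) hg
  have ha' : Continuous (deriv a) := ha.continuous_deriv le_rfl
  have hf'' : Continuous (deriv (deriv f)) := hf'.continuous_deriv le_rfl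
  have hg'' : Continuous (deriv (deriv g)) := hg'.continuous_deriv le_rfl
  have hwronskian : ∀ x, HasDerivAt (fun x => a x ^ (k + 1) * (g x * deriv f x - f x * deriv g x))
      (a x ^ k * (g x * radialOp k a f x) - a x ^ k * (f x * radialOp k a g x)) x := by
    intro x
    have hda := (ha.differentiable one_ne_zero x).hasDerivAt.pow (k + 1)
    have hdf := (hf.differentiable two_ne_zero x).hasDerivAt
    have hdg := (hg.differentiable two_ne_zero x).hasDerivAt
    convert! hda.mul ((hdg.mul (hf'.differentiable one_ne_zero x).hasDerivAt).sub
      (hdf.mul (hg'.differentiable one_ne_zero x).hasDerivAt)) using 1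
    simp only [radialOp, Nat.cast_add, Nat.cast_one, add_tsub_cancel_right, Pi.sub_apply,
      Pi.mul_apply, Pi.pow_apply]
    ring
  have hcont : ∀ {f g : ℝ → ℝ}, Continuous f → Continuous g → Continuous (deriv f) →
    Continuous (deriv (deriv f)) →
    IntervalIntegrable (fun x => a x ^ k * (g x * radialOp k a f x)) volume α β := by
    intro f g hf hg hf' hf''
    have := ha.continuous
    exact Continuous.intervalIntegrable (by simp only [radialOp]; fun_prop) _ _
  have hint₁ := hcont hf.continuous hg.continuous hf'.continuous hf''
  have hint₂ := hcont hg.continuous hf.continuous hg'.continuous hg''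
  rw [← sub_eq_zero, ← intervalIntegral.integral_sub hint₁ hint₂,
    intervalIntegral.integral_eq_sub_of_hasDerivAt (fun x _ => hwronskian x) (hint₁.sub hint₂)]
  simp [hα, hβ]

lemma energy_growth_le {a₀ a₁ y₀ y₁ y₂ c M : ℝ} (ha₀ : 0 < a₀) (ha₁ : M * a₀ ≤ a₁)
    (hode : a₀ * y₂ + (k + 1) * a₁ * y₁ = c * a₀ * y₀) :
    2 * y₁ * (y₀ + y₂) ≤ (|1 + c| + 2 * (k + 1) * |M|) * (y₀ ^ 2 + y₁ ^ 2) := by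
  refine le_of_mul_le_mul_left ?_ ha₀
  have hM : -a₁ ≤ |M| * a₀ := by nlinarith [neg_abs_le M]
  have hamgm : 2 * ((1 + c) * (y₀ * y₁)) ≤ |1 + c| * (y₀ ^ 2 + y₁ ^ 2) := by
    nlinarith [mul_nonneg (sub_nonneg.2 (le_abs_self (1 + c))) (sq_nonneg (y₀ + y₁)),
      mul_nonneg (sub_nonneg.2 (neg_abs_le (1 + c))) (sq_nonneg (y₀ - y₁))]
  calc a₀ * (2 * y₁ * (y₀ + y₂))
      = a₀ * (2 * ((1 + c) * (y₀ * y₁))) + 2 * (k + 1) * y₁ ^ 2 * -a₁ := by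
        linear_combination 2 * y₁ * hode
    _ ≤ a₀ * (|1 + c| * (y₀ ^ 2 + y₁ ^ 2)) + 2 * (k + 1) * y₁ ^ 2 * (|M| * a₀) := by gcongr
    _ ≤ a₀ * (|1 + c| * (y₀ ^ 2 + y₁ ^ 2)) + 2 * (k + 1) * (y₀ ^ 2 + y₁ ^ 2) * (|M| * a₀) := by
        gcongr
        exact le_add_of_nonneg_left (sq_nonneg _)
    _ = a₀ * ((|1 + c| + 2 * (k + 1) * |M|) * (y₀ ^ 2 + y₁ ^ 2)) := by ring

theorem eq_zero_of_radialOp_eq_mul {y : ℝ → ℝ} {c M X : ℝ} (ha₀ : a 0 = 0)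
    (ha₀' : deriv a 0 ≠ 0) (ha : ∀ x ∈ Ioo 0 X, 0 < a x)
    (ha' : ∀ x ∈ Ioo 0 X, M * a x ≤ deriv a x) (hy : ∀ x ∈ Icc 0 X, ContDiffAt ℝ 2 y x)
    (hode : ∀ x ∈ Icc 0 X, radialOp k a y x = c * a x * y x) (hy₀ : y 0 = 0)
    (hx : x ∈ Icc 0 X) : y x = 0 := by
  set L : ℝ := |1 + c| + 2 * (k + 1) * |M|
  have hX : 0 ≤ X := hx.1.trans hx.2
  have hdy : ∀ x ∈ Icc 0 X, HasDerivAt y (deriv y x) x := fun x hx =>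
    ((hy x hx).differentiableAt two_ne_zero).hasDerivAt
  have hdE : ∀ x ∈ Icc 0 X, HasDerivAt (fun x => (y x ^ 2 + deriv y x ^ 2) * exp (-L * x))
      ((2 * deriv y x * (y x + deriv (deriv y) x) - L * (y x ^ 2 + deriv y x ^ 2)) *
        exp (-L * x)) x := by
    intro x hx
    convert! (((hdy x hx).pow 2).add ((hasDerivAt_deriv_of_contDiffAt_two (hy x hx)).pow 2)).mul
      ((hasDerivAt_id x).const_mul (-L)).exp using 1
    simp only [neg_mul, Nat.cast_ofNat, Nat.add_one_sub_one, pow_one, id_eq, Pi.add_apply,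
      Pi.pow_apply, mul_one, mul_neg]
    ring
  have hgrowth : ∀ x ∈ Ioo 0 X,
      2 * deriv y x * (y x + deriv (deriv y) x) ≤ L * (y x ^ 2 + deriv y x ^ 2) := fun x hx =>
    energy_growth_le (ha x hx) (ha' x hx) (hode x (Ioo_subset_Icc_self hx))
  have hanti : AntitoneOn (fun x => (y x ^ 2 + deriv y x ^ 2) * exp (-L * x)) (Icc 0 X) := by
    refine antitoneOn_of_deriv_nonpos (convex_Icc 0 X)
      (fun x hx => (hdE x hx).continuousAt.continuousWithinAt) ?_ ?_
    all_goals rw [interior_Icc]; intro x hx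
    · exact (hdE x (Ioo_subset_Icc_self hx)).differentiableAt.differentiableWithinAt
    · rw [(hdE x (Ioo_subset_Icc_self hx)).deriv]
      exact mul_nonpos_of_nonpos_of_nonneg (sub_nonpos.2 (hgrowth x hx)) (exp_pos _).le
  have hy₀' : deriv y 0 = 0 := by
    have hode₀ := hode 0 ⟨le_rfl, hX⟩
    simp only [radialOp, ha₀, hy₀] at hode₀
    have hk : (k : ℝ) + 1 ≠ 0 := by positivity
    simpa [ha₀', hk] using hode₀
  have hE : (y x ^ 2 + deriv y x ^ 2) * exp (-L * x) ≤ 0 := by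
    simpa [hy₀, hy₀'] using hanti ⟨le_rfl, hX⟩ hx hx.1
  have hsq := nonpos_of_mul_nonpos_left hE (exp_pos _)
  exact pow_eq_zero_iff two_ne_zero |>.1 (by linarith [sq_nonneg (y x), sq_nonneg (deriv y x)])

theorem mul_eq_mul_of_radialOp_eq_mul {c M X : ℝ} (ha₀ : a 0 = 0) (ha₀' : deriv a 0 ≠ 0)
    (ha : ∀ x ∈ Ioo 0 X, 0 < a x) (ha' : ∀ x ∈ Ioo 0 X, M * a x ≤ deriv a x)
    (hf : ∀ x ∈ Icc 0 X, ContDiffAt ℝ 2 f x) (hg : ∀ x ∈ Icc 0 X, ContDiffAt ℝ 2 g x)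
    (hfode : ∀ x ∈ Icc 0 X, radialOp k a f x = c * a x * f x)
    (hgode : ∀ x ∈ Icc 0 X, radialOp k a g x = c * a x * g x) (hx : x ∈ Icc 0 X) :
    g 0 * f x = f 0 * g x := by
  refine sub_eq_zero.1 (eq_zero_of_radialOp_eq_mul (k := k) (c := c) (X := X)
    (y := fun x => g 0 * f x - f 0 * g x) ha₀ ha₀' ha ha'
    (fun x hx => (contDiffAt_const.mul (hf x hx)).sub (contDiffAt_const.mul (hg x hx)))
    (fun x hx => ?_) (by ring) hx)
  rw [radialOp_sub (contDiffAt_const.mul (hf x hx)) (contDiffAt_const.mul (hg x hx)),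
    radialOp_const_mul, radialOp_const_mul, hfode x hx, hgode x hx]
  ring

end RadialOperator

section Ultraspherical

open Polynomial Set

/-- The ultraspherical (Gegenbauer) equation `(1 - x²) p'' - (c + 1) x p' + μ p = 0`. Legendre
polynomials have `c = 1`, Chebyshev polynomials of the first kind `c = 0`, and differentiating
raises `c` by `2`. -/
def IsUltraspherical (c μ : ℝ) (p : ℝ[X]) : Prop :=
  (1 - X ^ 2) * derivative (derivative p) - C (c + 1) * X * derivative p + C μ * p = 0

namespace IsUltraspherical

variable {c μ : ℝ} {p : ℝ[X]}

lemma eval_eq (hp : IsUltraspherical c μ p) (x : ℝ) :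
    (1 - x ^ 2) * (derivative (derivative p)).eval x - (c + 1) * x * (derivative p).eval x +
      μ * p.eval x = 0 := by
  simpa using congrArg (Polynomial.eval x) hp

lemma const_mul (hp : IsUltraspherical c μ p) (b : ℝ) : IsUltraspherical c μ (C b * p) := by
  unfold IsUltraspherical at hp ⊢
  simp only [derivative_C_mul]
  linear_combination C b * hp

lemma derivative (hp : IsUltraspherical c μ p) :
    IsUltraspherical (c + 2) (μ - (c + 1)) (derivative p) := by
  have h := congrArg Polynomial.derivative hp
  unfold IsUltraspherical
  simp only [derivative_mul, derivative_one, derivative_X_pow, derivative_C, derivative_X,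
    derivative_zero, map_add, map_sub, map_one, Nat.cast_ofNat, map_ofNat] at h ⊢
  linear_combination h

lemma iterate_derivative (hp : IsUltraspherical c μ p) (j : ℕ) :
    IsUltraspherical (c + 2 * j) (μ - j * (j + c)) (Polynomial.derivative^[j] p) := by
  induction j with
  | zero => simpa using hp
  | succ j ih =>
    rw [Function.iterate_succ_apply']
    convert! ih.derivative using 1 <;> push_cast <;> ring

lemma prod_mul_iterate_derivative_eval_one (hp : IsUltraspherical c μ p) (m : ℕ) :
    (∏ j ∈ Finset.range m, (c + 2 * j + 1)) * (Polynomial.derivative^[m] p).eval 1 =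
      (∏ j ∈ Finset.range m, (μ - j * (j + c))) * p.eval 1 := by
  induction m with
  | zero => simp
  | succ m ih =>
    have h := (hp.iterate_derivative m).eval_eq 1
    rw [Finset.prod_range_succ, Finset.prod_range_succ, Function.iterate_succ_apply']
    linear_combination (μ - m * (m + c)) * ih -
      (∏ j ∈ Finset.range m, (c + 2 * j + 1)) * h

lemma radialOp_sin_eval_cos {k : ℕ} (hp : IsUltraspherical (k + 1) μ p) (θ : ℝ) :
    radialOp k sin (fun θ => p.eval (cos θ)) θ = -μ * sin θ * p.eval (cos θ) := by
  have hderiv : ∀ (q : ℝ[X]) θ, HasDerivAt (fun θ => q.eval (cos θ))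
      ((Polynomial.derivative q).eval (cos θ) * -sin θ) θ :=
    fun q θ => (q.hasDerivAt (cos θ)).comp θ (hasDerivAt_cos θ)
  have hderiv' := (hderiv (Polynomial.derivative p) θ).fun_mul (hasDerivAt_sin θ).fun_neg
  rw [radialOp, funext fun θ => (hderiv p θ).deriv, hderiv'.deriv, Real.deriv_sin]
  linear_combination sin θ * hp.eval_eq (cos θ) +
    sin θ * (Polynomial.derivative (Polynomial.derivative p)).eval (cos θ) * sin_sq_add_cos_sq θ

lemma radialOp_sinh_eval_cosh {k : ℕ} (hp : IsUltraspherical (k + 1) μ p) (η : ℝ) :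
    radialOp k sinh (fun η => p.eval (cosh η)) η = μ * sinh η * p.eval (cosh η) := by
  have hderiv : ∀ (q : ℝ[X]) η, HasDerivAt (fun η => q.eval (cosh η))
      ((Polynomial.derivative q).eval (cosh η) * sinh η) η :=
    fun q η => (q.hasDerivAt (cosh η)).comp η (Real.hasDerivAt_cosh η)
  have hderiv' := (hderiv (Polynomial.derivative p) η).fun_mul (Real.hasDerivAt_sinh η)
  rw [radialOp, funext fun η => (hderiv p η).deriv, hderiv'.deriv, Real.deriv_sinh]
  linear_combination -sinh η * hp.eval_eq (cosh η) -
    sinh η * (Polynomial.derivative (Polynomial.derivative p)).eval (cosh η) * Real.cosh_sq η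

lemma integral_sin_pow_mul_derivative {c : ℕ} (hp : IsUltraspherical c μ p) {g g' : ℝ → ℝ}
    (hg : ∀ x ∈ Icc (-1) 1, HasDerivAt g (g' x) x) (hg' : ContinuousOn g' (Icc (-1) 1)) :
    ∫ θ in 0..π, sin θ ^ (c + 2) * (Polynomial.derivative p).eval (cos θ) * g' (cos θ) =
      μ * ∫ θ in 0..π, sin θ ^ c * p.eval (cos θ) * g (cos θ) := by
  have hgcont : ContinuousOn g (Icc (-1) 1) := HasDerivAt.continuousOn hg
  have hcomp : ∀ {h : ℝ → ℝ}, ContinuousOn h (Icc (-1) 1) → Continuous fun θ => h (cos θ) :=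
    fun hh => hh.comp_continuous continuous_cos cos_mem_Icc
  have hderiv : ∀ θ, HasDerivAt
      (fun θ => sin θ ^ (c + 1) * (Polynomial.derivative p).eval (cos θ) * g (cos θ))
      (μ * (sin θ ^ c * p.eval (cos θ) * g (cos θ)) -
        sin θ ^ (c + 2) * (Polynomial.derivative p).eval (cos θ) * g' (cos θ)) θ := by
    intro θ
    convert! (((hasDerivAt_sin θ).pow (c + 1)).mul (((Polynomial.derivative p).hasDerivAt
      (cos θ)).comp θ (hasDerivAt_cos θ))).mul ((hg _ (cos_mem_Icc θ)).comp θ (hasDerivAt_cos θ))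
      using 1
    simp only [Nat.cast_add, Nat.cast_one, add_tsub_cancel_right, Function.comp_apply, Pi.pow_apply,
      mul_neg, Pi.mul_apply]
    linear_combination (sin θ ^ c * g (cos θ)) * (hp.eval_eq (cos θ) +
      (Polynomial.derivative (Polynomial.derivative p)).eval (cos θ) * sin_sq_add_cos_sq θ)
  have hint : ∀ (q : ℝ[X]) (d : ℕ) {h : ℝ → ℝ}, ContinuousOn h (Icc (-1) 1) →
      IntervalIntegrable (fun θ => sin θ ^ d * q.eval (cos θ) * h (cos θ)) volume 0 π := by
    intro q d h hh
    exact (((continuous_sin.pow d).mul (q.continuous.comp continuous_cos)).mul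
      (hcomp hh)).intervalIntegrable _ _
  have hleft := (hint p c hgcont).const_mul μ
  have hright := hint (Polynomial.derivative p) (c + 2) hg'
  rw [← intervalIntegral.integral_const_mul, eq_comm, ← sub_eq_zero,
    ← intervalIntegral.integral_sub hleft hright,
    intervalIntegral.integral_eq_sub_of_hasDerivAt (fun θ _ => hderiv θ) (hleft.sub hright)]
  simp

theorem integral_sin_pow_mul_iterate_derivative {c : ℕ} (hp : IsUltraspherical c μ p)
    {H : ℕ → ℝ → ℝ} (hH : ∀ j, ∀ x ∈ Icc (-1) 1, HasDerivAt (H j) (H (j + 1) x) x) (m : ℕ) :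
    ∫ θ in 0..π, sin θ ^ (c + 2 * m) * (Polynomial.derivative^[m] p).eval (cos θ) * H m (cos θ) =
      (∏ j ∈ Finset.range m, (μ - j * (j + c))) *
        ∫ θ in 0..π, sin θ ^ c * p.eval (cos θ) * H 0 (cos θ) := by
  induction m with
  | zero => simp
  | succ m ih =>
    have hpm : IsUltraspherical (c + 2 * m : ℕ) (μ - m * (m + c))
        (Polynomial.derivative^[m] p) := mod_cast hp.iterate_derivative m
    rw [Function.iterate_succ_apply', Finset.prod_range_succ, mul_right_comm, ← ih]
    exact (hpm.integral_sin_pow_mul_derivative (hH m)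
      (HasDerivAt.continuousOn (hH (m + 1)))).trans (mul_comm _ _)

end IsUltraspherical

lemma isUltraspherical_X_sq_sub_one_pow (n : ℕ) :
    IsUltraspherical (1 - 2 * n) (2 * n) ((X ^ 2 - 1) ^ n) := by
  have hfirst : (X ^ 2 - 1) * derivative ((X ^ 2 - 1 : ℝ[X]) ^ n) =
      2 * (n : ℝ[X]) * X * (X ^ 2 - 1) ^ n := by
    cases n with
    | zero => simp
    | succ n =>
      simp only [derivative_pow_succ, derivative_sub, derivative_one, derivative_X, map_add,
        map_natCast, map_one, Nat.cast_succ]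
      ring
  have h := congrArg derivative hfirst
  unfold IsUltraspherical
  simp only [derivative_mul, derivative_X_pow, derivative_one, derivative_ofNat, derivative_natCast,
    derivative_X, map_add, map_sub, map_mul, map_one, map_ofNat, map_natCast,
    Nat.cast_ofNat] at h ⊢
  linear_combination -h

/-- The `n`-th Legendre polynomial by Rodrigues' formula, as a polynomial; `legendreP n` is its
evaluation. -/
def legendrePoly (n : ℕ) : ℝ[X] :=
  C (1 / (2 ^ n * (n.factorial : ℝ))) * derivative^[n] ((X ^ 2 - 1) ^ n)

lemma isUltraspherical_legendrePoly (n : ℕ) :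
    IsUltraspherical 1 (n * (n + 1)) (legendrePoly n) := by
  convert! ((isUltraspherical_X_sq_sub_one_pow n).iterate_derivative n).const_mul _ using 1 <;> ring

lemma legendrePoly_eval_one (n : ℕ) : (legendrePoly n).eval 1 = 1 := by
  have h := aeval_iterate_derivative_self ((X ^ 2 - 1 : ℝ[X]) ^ n) n (1 : ℝ) (p' := (X + 1) ^ n)
    (by
      simp only [Polynomial.map_pow, Polynomial.map_sub, map_X, Polynomial.map_one, map_one,
        ← mul_pow]
      ring)
  have hn : (n.factorial : ℝ) ≠ 0 := mod_cast n.factorial_ne_zero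
  simp only [coe_aeval_eq_eval, eval_pow, eval_add, eval_X, eval_one, nsmul_eq_mul] at h
  simp only [legendrePoly, eval_mul, eval_C, h, one_add_one_eq_two]
  field_simp

lemma iteratedDeriv_eval (p : ℝ[X]) (m : ℕ) :
    iteratedDeriv m (fun x => p.eval x) = fun x => (derivative^[m] p).eval x := by
  induction m with
  | zero => simp
  | succ m ih => ext x; rw [iteratedDeriv_succ, ih, Polynomial.deriv, Function.iterate_succ_apply']

lemma legendreP_eq_eval (n : ℕ) : legendreP n = fun x => (legendrePoly n).eval x := by
  ext x
  have h := congrFun (iteratedDeriv_eval ((X ^ 2 - 1) ^ n) n) x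
  simp only [eval_pow, eval_sub, eval_X, eval_one] at h
  simp [legendreP, legendrePoly, h]

lemma iteratedDeriv_legendreP (m n : ℕ) (x : ℝ) :
    iteratedDeriv m (legendreP n) x = (derivative^[m] (legendrePoly n)).eval x := by
  rw [legendreP_eq_eval, iteratedDeriv_eval]

lemma prod_range_legendre_eigenvalue {n m : ℕ} (hm : m ≤ n) :
    ∏ j ∈ Finset.range m, ((n : ℝ) * (n + 1) - j * (j + 1)) =
      (n + m).factorial / (n - m).factorial := by
  induction m with
  | zero => simp [Nat.factorial_ne_zero]
  | succ m ih =>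
    obtain ⟨d, rfl⟩ := Nat.exists_eq_add_of_lt hm
    have hsub : m + d + 1 - m = d + 1 ∧ m + d + 1 - (m + 1) = d := by omega
    have hd : (d.factorial : ℝ) ≠ 0 := mod_cast d.factorial_ne_zero
    rw [Finset.prod_range_succ, ih (by omega), hsub.1, hsub.2, ← add_assoc _ m 1,
      Nat.factorial_succ (m + d + 1 + m), Nat.factorial_succ d]
    push_cast
    field_simp
    ring

end Ultraspherical

section RpowKernels

open Polynomial Set

variable {A B β : ℝ}

lemma hasDerivAt_sub_mul_rpow {x : ℝ} (hx : 0 < A - B * x) (j : ℕ) :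
    HasDerivAt
      (fun s => B ^ j * (∏ i ∈ Finset.range j, (β + i)) * (A - B * s) ^ (-β - j))
      (B ^ (j + 1) * (∏ i ∈ Finset.range (j + 1), (β + i)) *
        (A - B * x) ^ (-β - (j + 1 : ℕ))) x := by
  have hlin : HasDerivAt (fun s => A - B * s) (-B) x := by
    simpa using ((hasDerivAt_id x).const_mul B).const_sub A
  convert! (hlin.rpow_const (p := -β - j) (.inl hx.ne')).const_mul
    (B ^ j * ∏ i ∈ Finset.range j, (β + i)) using 1
  rw [Finset.prod_range_succ, show -β - (j + 1 : ℕ) = -β - j - 1 by push_cast; ring]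
  ring

theorem integral_sin_pow_mul_iterate_derivative_mul_rpow {c : ℕ} {μ : ℝ} {p : ℝ[X]}
    (hp : IsUltraspherical c μ p) (hAB : ∀ x ∈ Icc (-1) 1, 0 < A - B * x) (m : ℕ) :
    B ^ m * (∏ i ∈ Finset.range m, (β + i)) * ∫ θ in 0..π,
        sin θ ^ (c + 2 * m) * (derivative^[m] p).eval (cos θ) * (A - B * cos θ) ^ (-β - m) =
      (∏ j ∈ Finset.range m, (μ - j * (j + c))) *
        ∫ θ in 0..π, sin θ ^ c * p.eval (cos θ) * (A - B * cos θ) ^ (-β) := by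
  have h := hp.integral_sin_pow_mul_iterate_derivative
    (fun j x hx => hasDerivAt_sub_mul_rpow (β := β) (hAB x hx) j) m
  simp only [pow_zero, Finset.range_zero, Finset.prod_empty, one_mul, Nat.cast_zero,
    sub_zero] at h
  rw [← h, ← intervalIntegral.integral_const_mul]
  congr 1 with θ
  ring

lemma isUltraspherical_chebyshev_T (m : ℕ) :
    IsUltraspherical 0 (m ^ 2) (Chebyshev.T ℝ m) := by
  have h := Chebyshev.one_sub_X_sq_mul_derivative_derivative_T_eq_poly_in_T (R := ℝ) m
  simp only [Function.iterate_succ_apply', Function.iterate_zero_apply] at h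
  simp only [IsUltraspherical, zero_add, map_one, map_pow, map_natCast]
  push_cast at h
  linear_combination h

lemma iterate_derivative_chebyshev_T_eval_eq (m : ℕ) (x y : ℝ) :
    (derivative^[m] (Chebyshev.T ℝ m)).eval x = (derivative^[m] (Chebyshev.T ℝ m)).eval y := by
  have hdeg : (derivative^[m] (Chebyshev.T ℝ m)).natDegree = 0 := by
    simpa using natDegree_iterate_derivative (Chebyshev.T ℝ m) m
  rw [eq_C_of_natDegree_eq_zero hdeg, eval_C, eval_C]

lemma prod_range_sq_sub_sq_pos (m : ℕ) :
    0 < ∏ j ∈ Finset.range m, ((m : ℝ) ^ 2 - j * (j + (0 : ℕ))) := by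
  refine Finset.prod_pos fun j hj => ?_
  have hjm : (j : ℝ) < m := mod_cast Finset.mem_range.1 hj
  simp only [Nat.cast_zero, add_zero]
  nlinarith [(Nat.cast_nonneg j : (0 : ℝ) ≤ j)]

lemma two_pow_mul_prod_half_add (m : ℕ) :
    (2 : ℝ) ^ m * ∏ i ∈ Finset.range m, (1 / 2 + i : ℝ) =
      ∏ i ∈ Finset.range m, (2 * i + 1 : ℝ) := by
  induction m with
  | zero => simp
  | succ m ih => rw [Finset.prod_range_succ, Finset.prod_range_succ, ← ih]; ring

theorem integral_cos_mul_rpow_neg_half {R : ℝ} (hAR : ∀ x ∈ Icc (-1) 1, 0 < A - 2 * R * x)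
    (m : ℕ) :
    ∫ t in 0..π, cos (m * t) * (A - 2 * R * cos t) ^ (-(1 / 2) : ℝ) =
      R ^ m * ∫ t in 0..π, sin t ^ (2 * m) * (A - 2 * R * cos t) ^ (-(1 / 2) - m : ℝ) := by
  have hT : IsUltraspherical (0 : ℕ) (m ^ 2) (Chebyshev.T ℝ m) := by
    simpa using isUltraspherical_chebyshev_T m
  have hladder := integral_sin_pow_mul_iterate_derivative_mul_rpow (β := 1 / 2) hT hAR m
  have hone := hT.prod_mul_iterate_derivative_eval_one m
  have hconst : ∫ t in 0..π, sin t ^ (0 + 2 * m) * (derivative^[m] (Chebyshev.T ℝ m)).eval (cos t) *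
        (A - 2 * R * cos t) ^ (-(1 / 2) - m : ℝ) =
      (derivative^[m] (Chebyshev.T ℝ m)).eval 1 *
        ∫ t in 0..π, sin t ^ (2 * m) * (A - 2 * R * cos t) ^ (-(1 / 2) - m : ℝ) := by
    rw [← intervalIntegral.integral_const_mul, zero_add]
    congr 1 with t
    rw [iterate_derivative_chebyshev_T_eval_eq m (cos t) 1]
    ring
  simp only [Chebyshev.T_eval_one, CharP.cast_eq_zero, zero_add, mul_one,
    ← two_pow_mul_prod_half_add] at hone
  simp only [Chebyshev.T_real_cos, Int.cast_natCast, pow_zero, one_mul, hconst] at hladder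
  refine mul_left_cancel₀ (prod_range_sq_sub_sq_pos m).ne' (hladder.symm.trans ?_)
  rw [Nat.cast_zero, ← hone, mul_pow]
  ring

lemma integral_neg_one_one_eq_integral_cos {E : Type*} [NormedAddCommGroup E] [NormedSpace ℝ E]
    (g : ℝ → E) : ∫ x in (-1)..1, g x = ∫ θ in 0..π, sin θ • g (cos θ) := by
  have h := intervalIntegral.integral_deriv_smul_comp_of_deriv_nonpos (a := 0) (b := π) (g := g)
    continuousOn_cos (fun θ _ => hasDerivAt_cos θ) fun θ hθ => by
      rw [min_eq_left pi_nonneg, max_eq_right pi_nonneg] at hθ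
      exact neg_nonpos.2 (sin_pos_of_mem_Ioo hθ).le
  simp only [neg_smul, intervalIntegral.integral_neg, Function.comp_apply, cos_zero, cos_pi] at h
  rw [intervalIntegral.integral_symm, ← h, neg_neg]

lemma iteratedDeriv_legendreQ (n m : ℕ) {x : ℝ} (hx : 1 < x) :
    iteratedDeriv m (legendreQ n) x = (-1) ^ m * m.factorial / 2 *
      ∫ s in (-1)..1, (legendrePoly n).eval s * (x - s) ^ (-(m + 1) : ℝ) := by
  induction m generalizing x with
  | zero => simp [legendreQ, legendreP_eq_eval, rpow_neg_one, div_eq_mul_inv]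
  | succ m ih =>
    have hne : ∀ s ∈ Set.uIcc (-1) 1, x - s ≠ 0 := fun s hs => by
      rw [uIcc_of_le (by norm_num)] at hs
      linarith [hs.2]
    have hsmooth : ∀ s ∈ Set.uIcc (-1) 1, ContDiffAt ℝ 1
        (fun z : ℝ × ℝ => (legendrePoly n).eval z.2 * (z.1 - z.2) ^ (-(m + 1) : ℝ)) (x, s) :=
      fun s hs => (((legendrePoly n).contDiff_aeval 1).comp contDiff_snd).contDiffAt.mul
        ((contDiff_fst.sub contDiff_snd).contDiffAt.rpow_const_of_ne (hne s hs))
    have hpow : ∀ s ∈ Set.uIcc (-1) 1,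
        deriv (fun y => (legendrePoly n).eval s * (y - s) ^ (-(m + 1) : ℝ)) x =
          -(m + 1) * ((legendrePoly n).eval s * (x - s) ^ (-((m + 1 : ℕ) + 1) : ℝ)) := by
      intro s hs
      rw [((((hasDerivAt_id' x).sub_const s).rpow_const (.inl (hne s hs))).const_mul _).deriv]
      push_cast
      ring_nf
    rw [iteratedDeriv_succ, (Filter.eventuallyEq_of_mem (Ioi_mem_nhds hx) fun y hy =>
      ih hy).deriv_eq, ((hasDerivAt_intervalIntegral hsmooth).2.const_mul _).deriv,
      intervalIntegral.integral_congr hpow, intervalIntegral.integral_const_mul,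
      Nat.factorial_succ, pow_succ]
    push_cast
    ring

theorem integral_sin_pow_mul_iterate_derivative_legendrePoly {n m : ℕ} (hm : m ≤ n) {x : ℝ}
    (hx : 1 < x) :
    ∫ θ in 0..π, sin θ ^ (1 + 2 * m) * (derivative^[m] (legendrePoly n)).eval (cos θ) *
        (x - cos θ) ^ (-(2 * m + 1) : ℝ) =
      2 * (-1) ^ m * ((n + m).factorial / ((n - m).factorial * (2 * m).factorial)) *
        iteratedDeriv m (legendreQ n) x := by
  have hladder := integral_sin_pow_mul_iterate_derivative_mul_rpow (A := x) (B := 1) (β := m + 1)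
    (c := 1) (by simpa using isUltraspherical_legendrePoly n) (fun s hs => by linarith [hs.2]) m
  have hasc : (m.factorial : ℝ) * ∏ i ∈ Finset.range m, ((m : ℝ) + 1 + i) = (2 * m).factorial := by
    have h := m.factorial_mul_ascFactorial m
    rw [Nat.ascFactorial_eq_prod_range, ← two_mul] at h
    exact_mod_cast h
  have hfac : ((2 * m).factorial : ℝ) ≠ 0 := mod_cast Nat.factorial_ne_zero _
  simp only [one_pow, one_mul, Nat.cast_one, prod_range_legendre_eigenvalue hm, pow_one] at hladder
  rw [iteratedDeriv_legendreQ n m hx, integral_neg_one_one_eq_integral_cos]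
  simp only [smul_eq_mul, ← mul_assoc]
  rw [show (-(2 * m + 1) : ℝ) = -(m + 1) - m by ring]
  generalize ∫ θ in 0..π, sin θ ^ (1 + 2 * m) * _ * _ = I₁ at hladder ⊢
  generalize ∫ θ in 0..π, sin θ * (legendrePoly n).eval (cos θ) * _ = I₂ at hladder ⊢
  have hI₁ : I₁ = m.factorial / (2 * m).factorial *
      ((n + m).factorial / (n - m).factorial * I₂) := by
    rw [← hladder, div_mul_eq_mul_div, eq_div_iff hfac, ← hasc]
    ring
  rw [hI₁]
  field_simp
  rw [← pow_mul, pow_mul', neg_one_sq, one_pow, mul_one]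

end RpowKernels

section RingPotential

open Function Set
open scoped Interval

/-- The squared distance, in units of `a²`, between the points with spheroidal coordinates
`(cosh ξ, cos θ, t)` and `(cosh η, cos ψ, 0)`. -/
def spheroidalDistSq (ξ η θ ψ t : ℝ) : ℝ :=
  cosh ξ ^ 2 + cosh η ^ 2 + cos θ ^ 2 + cos ψ ^ 2 - 2 - 2 * cosh ξ * cosh η * cos θ * cos ψ -
    2 * sinh ξ * sinh η * sin θ * sin ψ * cos t

variable {k : ℕ} {ξ η θ ψ t : ℝ}

lemma contDiff_spheroidalDistSq {E : Type*} [NormedAddCommGroup E] [NormedSpace ℝ E] {n : ℕ}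
    {η θ ψ t : E → ℝ} (hη : ContDiff ℝ n η) (hθ : ContDiff ℝ n θ) (hψ : ContDiff ℝ n ψ)
    (ht : ContDiff ℝ n t) :
    ContDiff ℝ n fun z => spheroidalDistSq ξ (η z) (θ z) (ψ z) (t z) := by
  unfold spheroidalDistSq
  fun_prop

lemma spheroidalDistSq_pos (hη : |η| < ξ) : 0 < spheroidalDistSq ξ η θ ψ t := by
  obtain ⟨hneg, hpos⟩ := abs_lt.1 hη
  have hadd : ∀ x, 0 < cosh (ξ + η) - cos x := fun x =>
    sub_pos.2 ((cos_le_one x).trans_lt (one_lt_cosh.2 (by linarith)))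
  have hsub : ∀ x, 0 < cosh (ξ - η) - cos x := fun x =>
    sub_pos.2 ((cos_le_one x).trans_lt (one_lt_cosh.2 (by linarith)))
  have hconvex : spheroidalDistSq ξ η θ ψ t =
      (1 + cos t) / 2 * ((cosh (ξ + η) - cos (ψ + θ)) * (cosh (ξ - η) - cos (ψ - θ))) +
      (1 - cos t) / 2 * ((cosh (ξ - η) - cos (ψ + θ)) * (cosh (ξ + η) - cos (ψ - θ))) := by
    rw [spheroidalDistSq, cosh_add, cosh_sub, cos_add, cos_sub]
    linear_combination (1 - cosh η ^ 2) * cosh_sq ξ - sinh ξ ^ 2 * cosh_sq η +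
      sin ψ ^ 2 * sin_sq_add_cos_sq θ + (1 - cos θ ^ 2) * sin_sq_add_cos_sq ψ
  rw [hconvex]
  exact convex_Ioi (0 : ℝ) (mul_pos (hadd (ψ + θ)) (hsub (ψ - θ)))
    (mul_pos (hsub (ψ + θ)) (hadd (ψ - θ))) (a := (1 + cos t) / 2) (b := (1 - cos t) / 2)
    (by linarith [neg_one_le_cos t]) (by linarith [cos_le_one t]) (by ring)

lemma spheroidalDistSq_comm (ξ η θ ψ t : ℝ) :
    spheroidalDistSq ξ η θ ψ t = spheroidalDistSq ξ η ψ θ t := by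
  unfold spheroidalDistSq
  ring

lemma deriv_spheroidalDistSq_radial :
    deriv (fun η => spheroidalDistSq ξ η θ ψ t) = fun η =>
      2 * cosh η * sinh η - 2 * cosh ξ * cos θ * cos ψ * sinh η -
        2 * sinh ξ * sin θ * sin ψ * cos t * cosh η := by
  ext η
  refine HasDerivAt.deriv ?_
  convert! ((((hasDerivAt_cosh η).pow 2).sub ((hasDerivAt_cosh η).const_mul
    (2 * cosh ξ * cos θ * cos ψ))).sub ((hasDerivAt_sinh η).const_mul
    (2 * sinh ξ * sin θ * sin ψ * cos t))).add_const (cosh ξ ^ 2 + cos θ ^ 2 + cos ψ ^ 2 - 2)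
    using 1
  · ext η
    simp only [spheroidalDistSq, Pi.sub_apply, Pi.pow_apply]
    ring
  · ring

lemma deriv_deriv_spheroidalDistSq_radial :
    deriv (deriv fun η => spheroidalDistSq ξ η θ ψ t) η =
      2 * (cosh η ^ 2 + sinh η ^ 2) - 2 * cosh ξ * cos θ * cos ψ * cosh η -
        2 * sinh ξ * sin θ * sin ψ * cos t * sinh η := by
  rw [deriv_spheroidalDistSq_radial]
  refine HasDerivAt.deriv ?_
  convert! ((((hasDerivAt_cosh η).const_mul 2).mul (hasDerivAt_sinh η)).sub
    ((hasDerivAt_sinh η).const_mul (2 * cosh ξ * cos θ * cos ψ))).sub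
    ((hasDerivAt_cosh η).const_mul (2 * sinh ξ * sin θ * sin ψ * cos t)) using 1
  ring

lemma deriv_spheroidalDistSq_polar :
    deriv (fun θ => spheroidalDistSq ξ η θ ψ t) = fun θ =>
      -(2 * cos θ * sin θ) + 2 * cosh ξ * cosh η * cos ψ * sin θ -
        2 * sinh ξ * sinh η * sin ψ * cos t * cos θ := by
  ext θ
  refine HasDerivAt.deriv ?_
  convert! ((((hasDerivAt_cos θ).pow 2).sub ((hasDerivAt_cos θ).const_mul
    (2 * cosh ξ * cosh η * cos ψ))).sub ((hasDerivAt_sin θ).const_mul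
    (2 * sinh ξ * sinh η * sin ψ * cos t))).add_const (cosh ξ ^ 2 + cosh η ^ 2 + cos ψ ^ 2 - 2)
    using 1
  · ext θ
    simp only [spheroidalDistSq, Pi.sub_apply, Pi.pow_apply]
    ring
  · ring

lemma deriv_deriv_spheroidalDistSq_polar :
    deriv (deriv fun θ => spheroidalDistSq ξ η θ ψ t) θ =
      2 * (sin θ ^ 2 - cos θ ^ 2) + 2 * cosh ξ * cosh η * cos ψ * cos θ +
        2 * sinh ξ * sinh η * sin ψ * cos t * sin θ := by
  rw [deriv_spheroidalDistSq_polar]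
  refine HasDerivAt.deriv ?_
  convert! (((((hasDerivAt_cos θ).const_mul 2).mul (hasDerivAt_sin θ)).neg).add
    ((hasDerivAt_sin θ).const_mul (2 * cosh ξ * cosh η * cos ψ))).sub
    ((hasDerivAt_cos θ).const_mul (2 * sinh ξ * sinh η * sin ψ * cos t)) using 1
  ring

lemma hasDerivAt_spheroidalDistSq_azimuth :
    HasDerivAt (fun t => spheroidalDistSq ξ η θ ψ t)
      (2 * sinh ξ * sinh η * sin θ * sin ψ * sin t) t := by
  convert! ((hasDerivAt_cos t).const_mul (2 * sinh ξ * sinh η * sin θ * sin ψ)).const_sub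
    (cosh ξ ^ 2 + cosh η ^ 2 + cos θ ^ 2 + cos ψ ^ 2 - 2 - 2 * cosh ξ * cosh η * cos θ * cos ψ)
    using 1
  ring

lemma spheroidalDistSq_eikonal (ξ η θ ψ t : ℝ) :
    deriv (fun η => spheroidalDistSq ξ η θ ψ t) η ^ 2 +
        deriv (fun θ => spheroidalDistSq ξ η θ ψ t) θ ^ 2 =
      4 * (sinh η ^ 2 + sin θ ^ 2) *
        (spheroidalDistSq ξ η θ ψ t - (sinh ξ * sin ψ * sin t) ^ 2) := by
  rw [deriv_spheroidalDistSq_radial, deriv_spheroidalDistSq_polar, spheroidalDistSq]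
  grind [cosh_sq ξ, cosh_sq η, sin_sq_add_cos_sq θ, sin_sq_add_cos_sq ψ, sin_sq_add_cos_sq t]

lemma radialOp_spheroidalDistSq (k : ℕ) (ξ η θ ψ t : ℝ) :
    sin θ * radialOp k sinh (fun η => spheroidalDistSq ξ η θ ψ t) η +
        sinh η * radialOp k sin (fun θ => spheroidalDistSq ξ η θ ψ t) θ =
      2 * (sinh η ^ 2 + sin θ ^ 2) *
        ((k + 3) * sinh η * sin θ - (k + 1) * sinh ξ * sin ψ * cos t) := by
  rw [radialOp, radialOp, deriv_deriv_spheroidalDistSq_radial, deriv_deriv_spheroidalDistSq_polar,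
    deriv_spheroidalDistSq_radial, deriv_spheroidalDistSq_polar, Real.deriv_sinh, Real.deriv_sin]
  grind [cosh_sq ξ, cosh_sq η, sin_sq_add_cos_sq θ, sin_sq_add_cos_sq ψ, sin_sq_add_cos_sq t]

lemma radialOp_spheroidalDistSq_rpow (k : ℕ) (hη : |η| < ξ) (θ ψ t : ℝ) :
    sin θ * radialOp k sinh (fun η => spheroidalDistSq ξ η θ ψ t ^ (-(k + 1) / 2 : ℝ)) η +
        sinh η * radialOp k sin (fun θ => spheroidalDistSq ξ η θ ψ t ^ (-(k + 1) / 2 : ℝ)) θ =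
      (sinh η ^ 2 + sin θ ^ 2) * ((k + 1) * sinh ξ * sin ψ) *
        spheroidalDistSq ξ η θ ψ t ^ (-(k + 1) / 2 - 2 : ℝ) *
        ((k + 1) * cos t * spheroidalDistSq ξ η θ ψ t -
          (k + 3) * sinh η * sin θ * sinh ξ * sin ψ * sin t ^ 2) := by
  have hpos : 0 < spheroidalDistSq ξ η θ ψ t := spheroidalDistSq_pos hη
  have hradial : ContDiff ℝ 2 fun η => spheroidalDistSq ξ η θ ψ t :=
    contDiff_spheroidalDistSq (n := 2) contDiff_id contDiff_const contDiff_const contDiff_const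
  have hpolar : ContDiff ℝ 2 fun θ => spheroidalDistSq ξ η θ ψ t :=
    contDiff_spheroidalDistSq (n := 2) contDiff_const contDiff_id contDiff_const contDiff_const
  rw [radialOp_rpow hradial.contDiffAt hpos, radialOp_rpow hpolar.contDiffAt hpos]
  linear_combination (-(k + 1) / 2 * spheroidalDistSq ξ η θ ψ t ^ (-(k + 1) / 2 - 2 : ℝ)) *
    (spheroidalDistSq ξ η θ ψ t * radialOp_spheroidalDistSq k ξ η θ ψ t -
      (k + 3) / 2 * sinh η * sin θ * spheroidalDistSq_eikonal ξ η θ ψ t)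

lemma hasDerivAt_azimuthal_flux (hη : |η| < ξ) :
    HasDerivAt (fun t => sin t ^ (k + 1) * spheroidalDistSq ξ η θ ψ t ^ (-(k + 1) / 2 - 1 : ℝ))
      (sin t ^ k * (spheroidalDistSq ξ η θ ψ t ^ (-(k + 1) / 2 - 2 : ℝ) *
        ((k + 1) * cos t * spheroidalDistSq ξ η θ ψ t -
          (k + 3) * sinh η * sin θ * sinh ξ * sin ψ * sin t ^ 2))) t := by
  have hpos : 0 < spheroidalDistSq ξ η θ ψ t := spheroidalDistSq_pos hη
  have hpow : spheroidalDistSq ξ η θ ψ t ^ (-(k + 1) / 2 - 1 : ℝ) =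
      spheroidalDistSq ξ η θ ψ t ^ (-(k + 1) / 2 - 2 : ℝ) * spheroidalDistSq ξ η θ ψ t := by
    rw [← rpow_add_one hpos.ne']
    ring_nf
  convert! ((hasDerivAt_sin t).pow (k + 1)).mul
    (hasDerivAt_spheroidalDistSq_azimuth.rpow_const (p := -(k + 1) / 2 - 1) (.inl hpos.ne')) using 1
  rw [hpow, show (-(k + 1) / 2 - 1 - 1 : ℝ) = -(k + 1) / 2 - 2 by ring]
  simp only [Pi.pow_apply, Nat.add_sub_cancel]
  push_cast
  ring

/-- The potential at `(cosh η, cos ψ, 0)` of the ring through `(cosh ξ, cos θ)`, for the Newtonian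
kernel of dimension `k + 3`: the weight `sin t ^ k` is the density of the polar angle `t` on the
sphere swept out by the ring. Distances are in units of `a`. -/
def ringPotential (k : ℕ) (ξ η θ ψ : ℝ) : ℝ :=
  ∫ t in 0..π, sin t ^ k * spheroidalDistSq ξ η θ ψ t ^ (-(k + 1) / 2 : ℝ)

lemma ringPotential_comm (k : ℕ) (ξ η θ ψ : ℝ) :
    ringPotential k ξ η θ ψ = ringPotential k ξ η ψ θ := by
  simp only [ringPotential, spheroidalDistSq_comm ξ η θ ψ]

lemma contDiffAt_ringPotential_integrand {E : Type*} [NormedAddCommGroup E] [NormedSpace ℝ E]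
    {n : ℕ} {η θ ψ t : E → ℝ} {z : E} (hη : ContDiff ℝ n η) (hθ : ContDiff ℝ n θ)
    (hψ : ContDiff ℝ n ψ) (ht : ContDiff ℝ n t) (hz : |η z| < ξ) :
    ContDiffAt ℝ n (fun z => sin (t z) ^ k *
      spheroidalDistSq ξ (η z) (θ z) (ψ z) (t z) ^ (-(k + 1) / 2 : ℝ)) z :=
  (ht.sin.pow k).contDiffAt.mul ((contDiff_spheroidalDistSq hη hθ hψ ht).contDiffAt.rpow_const_of_ne
    (spheroidalDistSq_pos hz).ne')

lemma contDiffAt_ringPotential {E : Type} [NormedAddCommGroup E] [NormedSpace ℝ E] {n : ℕ}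
    {η θ ψ : E → ℝ} {z : E} (hη : ContDiff ℝ n η) (hθ : ContDiff ℝ n θ) (hψ : ContDiff ℝ n ψ)
    (hz : |η z| < ξ) : ContDiffAt ℝ n (fun z => ringPotential k ξ (η z) (θ z) (ψ z)) z :=
  contDiffAt_intervalIntegral fun _ _ => contDiffAt_ringPotential_integrand
    (hη.comp contDiff_fst) (hθ.comp contDiff_fst) (hψ.comp contDiff_fst) contDiff_snd hz

theorem radialOp_ringPotential (k : ℕ) (hη : |η| < ξ) (θ ψ : ℝ) :
    sin θ * radialOp k sinh (fun η => ringPotential k ξ η θ ψ) η +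
      sinh η * radialOp k sin (fun θ => ringPotential k ξ η θ ψ) θ = 0 := by
  obtain ⟨hint, hradial⟩ := radialOp_intervalIntegral (k := k) (a := sinh) (x := η) (α := 0)
    (β := π) (F := fun η t => sin t ^ k * spheroidalDistSq ξ η θ ψ t ^ (-(k + 1) / 2 : ℝ))
    fun t _ => contDiffAt_ringPotential_integrand (n := 2) contDiff_fst contDiff_const
      contDiff_const contDiff_snd hη
  obtain ⟨hint', hpolar⟩ := radialOp_intervalIntegral (k := k) (a := sin) (x := θ) (α := 0)
    (β := π) (F := fun θ t => sin t ^ k * spheroidalDistSq ξ η θ ψ t ^ (-(k + 1) / 2 : ℝ))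
    fun t _ => contDiffAt_ringPotential_integrand (n := 2) contDiff_const contDiff_fst
      contDiff_const contDiff_snd hη
  simp only [ringPotential]
  rw [hradial, hpolar, ← intervalIntegral.integral_const_mul,
    ← intervalIntegral.integral_const_mul,
    ← intervalIntegral.integral_add (hint.const_mul _) (hint'.const_mul _)]
  have hflux : ∀ t ∈ [[0, π]], HasDerivAt
      (fun t => (sinh η ^ 2 + sin θ ^ 2) * ((k + 1) * sinh ξ * sin ψ) *
        (sin t ^ (k + 1) * spheroidalDistSq ξ η θ ψ t ^ (-(k + 1) / 2 - 1 : ℝ)))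
      (sin θ * radialOp k sinh
          (fun η => sin t ^ k * spheroidalDistSq ξ η θ ψ t ^ (-(k + 1) / 2 : ℝ)) η +
        sinh η * radialOp k sin
          (fun θ => sin t ^ k * spheroidalDistSq ξ η θ ψ t ^ (-(k + 1) / 2 : ℝ)) θ) t := by
    intro t _
    convert! (hasDerivAt_azimuthal_flux hη).const_mul
      ((sinh η ^ 2 + sin θ ^ 2) * ((k + 1) * sinh ξ * sin ψ)) using 1
    rw [radialOp_const_mul, radialOp_const_mul]
    linear_combination sin t ^ k * radialOp_spheroidalDistSq_rpow k hη θ ψ t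
  rw [intervalIntegral.integral_eq_sub_of_hasDerivAt hflux
    ((hint.const_mul _).add (hint'.const_mul _))]
  simp

end RingPotential

section SurfacePotential

open Polynomial Set
open scoped Interval

/-- The potential at `(cosh η, cos ψ)` of the density `p (cos θ)` on the spheroid `cosh ξ`, built
from the rings of `ringPotential`. For `k = 2 m` it carries the azimuthal mode `m` of the
three-dimensional single layer potential. -/
def surfacePotential (k : ℕ) (ξ : ℝ) (p : ℝ[X]) (η ψ : ℝ) : ℝ :=
  ∫ θ in 0..π, sin θ ^ (k + 1) * p.eval (cos θ) * ringPotential k ξ η θ ψ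

variable {k : ℕ} {ξ η ψ μ : ℝ} {p : ℝ[X]}

lemma contDiffAt_surfacePotential_integrand {E : Type} [NormedAddCommGroup E] [NormedSpace ℝ E]
    {n : ℕ} {η θ ψ : E → ℝ} {z : E} (hη : ContDiff ℝ n η) (hθ : ContDiff ℝ n θ)
    (hψ : ContDiff ℝ n ψ) (hz : |η z| < ξ) :
    ContDiffAt ℝ n (fun z => sin (θ z) ^ (k + 1) * p.eval (cos (θ z)) *
      ringPotential k ξ (η z) (θ z) (ψ z)) z :=
  ((hθ.sin.pow _).mul ((p.contDiff_aeval n).comp hθ.cos)).contDiffAt.mul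
    (contDiffAt_ringPotential hη hθ hψ hz)

lemma contDiffAt_surfacePotential {E : Type} [NormedAddCommGroup E] [NormedSpace ℝ E] {n : ℕ}
    {η ψ : E → ℝ} {z : E} (hη : ContDiff ℝ n η) (hψ : ContDiff ℝ n ψ) (hz : |η z| < ξ) :
    ContDiffAt ℝ n (fun z => surfacePotential k ξ p (η z) (ψ z)) z :=
  contDiffAt_intervalIntegral fun _ _ => contDiffAt_surfacePotential_integrand
    (hη.comp contDiff_fst) contDiff_snd (hψ.comp contDiff_fst) hz

lemma radialOp_sinh_surfacePotential_eq_integral (hη : |η| < ξ) :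
    radialOp k sinh (fun η => surfacePotential k ξ p η ψ) η = ∫ θ in 0..π,
      sin θ ^ (k + 1) * p.eval (cos θ) * radialOp k sinh (fun η => ringPotential k ξ η θ ψ) η := by
  have h := (radialOp_intervalIntegral (k := k) (a := sinh) (x := η) (α := 0) (β := π)
    (F := fun η θ => sin θ ^ (k + 1) * p.eval (cos θ) * ringPotential k ξ η θ ψ) fun θ _ =>
      contDiffAt_surfacePotential_integrand (n := 2) contDiff_fst contDiff_snd contDiff_const hη).2
  simp only [radialOp_const_mul] at h
  exact h

lemma radialOp_sin_surfacePotential_eq_integral (hη : |η| < ξ) :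
    radialOp k sin (fun ψ => surfacePotential k ξ p η ψ) ψ = ∫ θ in 0..π,
      sin θ ^ (k + 1) * p.eval (cos θ) * radialOp k sin (fun ψ => ringPotential k ξ η θ ψ) ψ := by
  have h := (radialOp_intervalIntegral (k := k) (a := sin) (x := ψ) (α := 0) (β := π)
    (F := fun ψ θ => sin θ ^ (k + 1) * p.eval (cos θ) * ringPotential k ξ η θ ψ) fun θ _ =>
      contDiffAt_surfacePotential_integrand (n := 2) contDiff_const contDiff_snd contDiff_fst hη).2
  simp only [radialOp_const_mul] at h
  exact h

theorem radialOp_sinh_surfacePotential (hp : IsUltraspherical (k + 1) μ p) (hη : |η| < ξ) :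
    radialOp k sinh (fun η => surfacePotential k ξ p η ψ) η =
      μ * sinh η * surfacePotential k ξ p η ψ := by
  have hK : ContDiff ℝ 2 fun θ => ringPotential k ξ η θ ψ := contDiff_iff_contDiffAt.2 fun θ =>
    contDiffAt_ringPotential (n := 2) contDiff_const contDiff_id contDiff_const hη
  have hpcos : ContDiff ℝ 2 fun θ => p.eval (cos θ) := (p.contDiff_aeval 2).comp contDiff_cos
  calc radialOp k sinh (fun η => surfacePotential k ξ p η ψ) η
      = ∫ θ in 0..π, sin θ ^ (k + 1) * p.eval (cos θ) *
          radialOp k sinh (fun η => ringPotential k ξ η θ ψ) η :=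
        radialOp_sinh_surfacePotential_eq_integral hη
    _ = ∫ θ in 0..π, -sinh η * (sin θ ^ k *
          (p.eval (cos θ) * radialOp k sin (fun θ => ringPotential k ξ η θ ψ) θ)) := by
        congr 1 with θ
        linear_combination sin θ ^ k * p.eval (cos θ) * radialOp_ringPotential k hη θ ψ
    _ = -sinh η * ∫ θ in 0..π, sin θ ^ k *
          (ringPotential k ξ η θ ψ * radialOp k sin (fun θ => p.eval (cos θ)) θ) := by
        rw [intervalIntegral.integral_const_mul,
          integral_pow_mul_mul_radialOp_comm contDiff_sin sin_zero sin_pi hK hpcos]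
    _ = μ * sinh η * surfacePotential k ξ p η ψ := by
        simp only [surfacePotential, hp.radialOp_sin_eval_cos]
        rw [← intervalIntegral.integral_const_mul, ← intervalIntegral.integral_const_mul]
        congr 1 with θ
        ring

theorem radialOp_sin_surfacePotential (hp : IsUltraspherical (k + 1) μ p) (hη₀ : 0 < η)
    (hη : η < ξ) :
    radialOp k sin (fun ψ => surfacePotential k ξ p η ψ) ψ =
      -μ * sin ψ * surfacePotential k ξ p η ψ := by
  have habs : |η| < ξ := by rwa [abs_of_pos hη₀]
  refine mul_left_cancel₀ (sinh_pos_iff.2 hη₀).ne' ?_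
  calc sinh η * radialOp k sin (fun ψ => surfacePotential k ξ p η ψ) ψ
      = -sin ψ * radialOp k sinh (fun η => surfacePotential k ξ p η ψ) η := by
        rw [radialOp_sin_surfacePotential_eq_integral habs,
          radialOp_sinh_surfacePotential_eq_integral habs,
          ← intervalIntegral.integral_const_mul, ← intervalIntegral.integral_const_mul]
        congr 1 with θ
        simp only [ringPotential_comm k ξ _ θ]
        linear_combination sin θ ^ (k + 1) * p.eval (cos θ) * radialOp_ringPotential k habs ψ θ
    _ = sinh η * (-μ * sin ψ * surfacePotential k ξ p η ψ) := by
        rw [radialOp_sinh_surfacePotential hp habs]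
        ring

lemma surfacePotential_separate_polar (hp : IsUltraspherical (k + 1) μ p) (hη₀ : 0 < η) (hη : η < ξ)
    (hψ : ψ ∈ Ico 0 π) :
    p.eval 1 * surfacePotential k ξ p η ψ = surfacePotential k ξ p η 0 * p.eval (cos ψ) := by
  have habs : |η| < ξ := by rwa [abs_of_pos hη₀]
  have hsin : ∀ x ∈ Ioo 0 ψ, 0 < sin x := fun x hx => sin_pos_of_mem_Ioo ⟨hx.1, hx.2.trans hψ.2⟩
  have hcot : ∀ x ∈ Ioo 0 ψ, cos ψ / sin ψ * sin x ≤ deriv sin x := by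
    intro x hx
    have hdiff := sin_pos_of_mem_Ioo ⟨sub_pos.2 hx.2, (sub_lt_self ψ hx.1).trans hψ.2⟩
    have hsinψ := sin_pos_of_mem_Ioo ⟨hx.1.trans hx.2, hψ.2⟩
    rw [sin_sub] at hdiff
    rw [Real.deriv_sin, div_mul_eq_mul_div, div_le_iff₀ hsinψ]
    linarith
  simpa using mul_eq_mul_of_radialOp_eq_mul (k := k) (c := -μ) (x := ψ)
    (f := fun ψ => surfacePotential k ξ p η ψ) (g := fun ψ => p.eval (cos ψ)) sin_zero (by simp)
    hsin hcot
    (fun x _ => contDiffAt_surfacePotential (n := 2) contDiff_const contDiff_id habs)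
    (fun x _ => ((p.contDiff_aeval 2).comp contDiff_cos).contDiffAt)
    (fun x _ => radialOp_sin_surfacePotential hp hη₀ hη)
    (fun x _ => hp.radialOp_sin_eval_cos x) ⟨hψ.1, le_rfl⟩

lemma surfacePotential_separate_radial (hp : IsUltraspherical (k + 1) μ p) (hη₀ : 0 ≤ η)
    (hη : η < ξ) :
    p.eval 1 * surfacePotential k ξ p η ψ = surfacePotential k ξ p 0 ψ * p.eval (cosh η) := by
  have habs : ∀ x ∈ Icc 0 η, |x| < ξ := fun x hx => by
    rw [abs_of_nonneg hx.1]
    exact hx.2.trans_lt hη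
  simpa using mul_eq_mul_of_radialOp_eq_mul (k := k) (c := μ) (M := 0) (x := η)
    (f := fun η => surfacePotential k ξ p η ψ) (g := fun η => p.eval (cosh η)) sinh_zero (by simp)
    (fun x hx => sinh_pos_iff.2 hx.1) (fun x _ => by simp [(cosh_pos x).le])
    (fun x hx => contDiffAt_surfacePotential (n := 2) contDiff_id contDiff_const (habs x hx))
    (fun x _ => ((p.contDiff_aeval 2).comp contDiff_cosh).contDiffAt)
    (fun x hx => radialOp_sinh_surfacePotential hp (habs x hx))
    (fun x _ => hp.radialOp_sinh_eval_cosh x) ⟨hη₀, le_rfl⟩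

lemma prod_odd_div_even (m : ℕ) :
    ∏ i ∈ Finset.range m, (2 * (i : ℝ) + 1) / (2 * i + 2) =
      (2 * m).factorial / (2 ^ m * m.factorial) ^ 2 := by
  induction m with
  | zero => simp
  | succ m ih =>
    rw [Finset.prod_range_succ, ih, show 2 * (m + 1) = 2 * m + 1 + 1 by ring]
    simp only [Nat.factorial_succ]
    push_cast
    field_simp
    ring

lemma ringPotential_zero_zero (m : ℕ) (hξ : 0 < ξ) (θ : ℝ) :
    ringPotential (2 * m) ξ 0 θ 0 =
      π * ((2 * m).factorial / (2 ^ m * m.factorial) ^ 2) *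
        (cosh ξ - cos θ) ^ (-(2 * m + 1) : ℝ) := by
  have hpos : 0 ≤ cosh ξ - cos θ :=
    sub_nonneg.2 ((cos_le_one θ).trans (one_lt_cosh.2 hξ.ne').le)
  have hsq : ∀ t, spheroidalDistSq ξ 0 θ 0 t = (cosh ξ - cos θ) ^ (2 : ℝ) := fun t => by
    rw [rpow_two]
    simp only [spheroidalDistSq, cosh_zero, sinh_zero, cos_zero]
    ring
  simp only [ringPotential, hsq, ← rpow_mul hpos]
  rw [intervalIntegral.integral_mul_const, integral_sin_pow_even, prod_odd_div_even]
  push_cast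
  ring_nf

variable {n m : ℕ}

lemma iterate_derivative_legendrePoly_eval_one (hm : m ≤ n) :
    2 ^ m * m.factorial * (derivative^[m] (legendrePoly n)).eval 1 =
      (n + m).factorial / (n - m).factorial := by
  have hprod : ∏ j ∈ Finset.range m, (1 + 2 * (j : ℝ) + 1) = 2 ^ m * m.factorial := by
    rw [← Finset.prod_range_add_one_eq_factorial, Nat.cast_prod, ← Finset.card_range m,
      ← Finset.prod_const, Finset.card_range, ← Finset.prod_mul_distrib]
    exact Finset.prod_congr rfl fun j _ => by push_cast; ring
  rw [← hprod, (isUltraspherical_legendrePoly n).prod_mul_iterate_derivative_eval_one,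
    legendrePoly_eval_one, mul_one, ← prod_range_legendre_eigenvalue hm]

lemma surfacePotential_zero_zero (hm : m ≤ n) (hξ : 0 < ξ) :
    surfacePotential (2 * m) ξ (derivative^[m] (legendrePoly n)) 0 0 =
      2 * π * (-1) ^ m * ((n - m).factorial / (n + m).factorial) *
        iteratedDeriv m (legendreQ n) (cosh ξ) *
        (derivative^[m] (legendrePoly n)).eval 1 ^ 2 := by
  have hone : (derivative^[m] (legendrePoly n)).eval 1 =
      (n + m).factorial / (n - m).factorial / (2 ^ m * m.factorial) := by
    rw [eq_div_iff (by positivity), mul_comm, iterate_derivative_legendrePoly_eval_one hm]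
  calc surfacePotential (2 * m) ξ (derivative^[m] (legendrePoly n)) 0 0
      = π * ((2 * m).factorial / (2 ^ m * m.factorial) ^ 2) * ∫ θ in 0..π, sin θ ^ (1 + 2 * m) *
          (derivative^[m] (legendrePoly n)).eval (cos θ) *
          (cosh ξ - cos θ) ^ (-(2 * m + 1) : ℝ) := by
        rw [surfacePotential, ← intervalIntegral.integral_const_mul]
        congr 1 with θ
        rw [ringPotential_zero_zero m hξ]
        ring
    _ = _ := by
        rw [integral_sin_pow_mul_iterate_derivative_legendrePoly hm (one_lt_cosh.2 hξ.ne'), hone]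
        field_simp

theorem surfacePotential_iterate_derivative_legendrePoly (hm : m ≤ n) (hη₀ : 0 < η) (hη : η < ξ)
    (hψ : ψ ∈ Ico 0 π) :
    surfacePotential (2 * m) ξ (derivative^[m] (legendrePoly n)) η ψ =
      2 * π * (-1) ^ m * ((n - m).factorial / (n + m).factorial) *
        iteratedDeriv m (legendreQ n) (cosh ξ) *
        (derivative^[m] (legendrePoly n)).eval (cosh η) *
        (derivative^[m] (legendrePoly n)).eval (cos ψ) := by
  have hone : (derivative^[m] (legendrePoly n)).eval 1 ≠ 0 := by
    refine right_ne_zero_of_mul (a := (2 ^ m * m.factorial : ℝ)) ?_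
    rw [iterate_derivative_legendrePoly_eval_one hm]
    positivity
  have hp := (isUltraspherical_legendrePoly n).iterate_derivative m
  rw [show (1 + 2 * m : ℝ) = ↑(2 * m) + 1 by push_cast; ring] at hp
  refine mul_left_cancel₀ (pow_ne_zero 2 hone) ?_
  linear_combination (derivative^[m] (legendrePoly n)).eval 1 *
      surfacePotential_separate_polar hp hη₀ hη hψ +
    (derivative^[m] (legendrePoly n)).eval (cos ψ) *
      surfacePotential_separate_radial (ψ := 0) hp hη₀.le hη +
    (derivative^[m] (legendrePoly n)).eval (cosh η) *
      (derivative^[m] (legendrePoly n)).eval (cos ψ) *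
      surfacePotential_zero_zero hm (hη₀.trans hη)

end SurfacePotential

section AzimuthalModes

open Polynomial Set
open Complex (I exp_nat_mul_two_pi_mul_I)
open scoped Interval

/-- The potential at `(cosh η, cos ψ)` of the density `p (cos θ) * sin θ ^ m` on one meridian of the
spheroid `cosh ξ`, whose azimuth differs by `t` from that of the target. -/
def meridianPotential (m : ℕ) (ξ : ℝ) (p : ℝ[X]) (η ψ t : ℝ) : ℝ :=
  ∫ θ in 0..π, sin θ ^ (m + 1) * p.eval (cos θ) * spheroidalDistSq ξ η θ ψ t ^ (-(1 / 2) : ℝ)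

variable {m : ℕ} {ξ η ψ φ : ℝ} {p : ℝ[X]}

lemma continuous_meridianPotential_integrand (hη : |η| < ξ) :
    Continuous fun z : ℝ × ℝ => sin z.2 ^ (m + 1) * p.eval (cos z.2) *
      spheroidalDistSq ξ η z.2 ψ z.1 ^ (-(1 / 2) : ℝ) := by
  have hD := contDiff_spheroidalDistSq (n := 0) (ξ := ξ) (η := fun _ : ℝ × ℝ => η)
    (ψ := fun _ => ψ) contDiff_const contDiff_snd contDiff_const contDiff_fst
  exact Continuous.mul (by fun_prop)
    (hD.continuous.rpow_const fun _ => .inl (spheroidalDistSq_pos hη).ne')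

lemma continuous_meridianPotential (hη : |η| < ξ) : Continuous (meridianPotential m ξ p η ψ) :=
  intervalIntegral.continuous_parametric_intervalIntegral_of_continuous'
    (continuous_meridianPotential_integrand hη) _ _

lemma integral_cos_mul_spheroidalDistSq_rpow (m : ℕ) (hη : |η| < ξ) (θ ψ : ℝ) :
    ∫ t in 0..π, cos (m * t) * spheroidalDistSq ξ η θ ψ t ^ (-(1 / 2) : ℝ) =
      (sinh ξ * sinh η * sin θ * sin ψ) ^ m * ringPotential (2 * m) ξ η θ ψ := by
  obtain ⟨A, hD⟩ : ∃ A, ∀ t, spheroidalDistSq ξ η θ ψ t =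
      A - 2 * (sinh ξ * sinh η * sin θ * sin ψ) * cos t :=
    ⟨spheroidalDistSq ξ η θ ψ (π / 2), fun t => by
      simp only [spheroidalDistSq, cos_pi_div_two]
      ring⟩
  simp only [ringPotential, hD]
  rw [integral_cos_mul_rpow_neg_half]
  · push_cast
    ring_nf
  · intro x hx
    rw [← cos_arccos hx.1 hx.2, ← hD]
    exact spheroidalDistSq_pos hη

lemma integral_cos_mul_meridianPotential (hη : |η| < ξ) :
    ∫ t in 0..π, cos (m * t) * meridianPotential m ξ p η ψ t =
      (sinh ξ * sinh η * sin ψ) ^ m * surfacePotential (2 * m) ξ p η ψ := by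
  calc ∫ t in 0..π, cos (m * t) * meridianPotential m ξ p η ψ t
      = ∫ t in 0..π, ∫ θ in 0..π, cos (m * t) * (sin θ ^ (m + 1) * p.eval (cos θ) *
          spheroidalDistSq ξ η θ ψ t ^ (-(1 / 2) : ℝ)) := by
        simp only [meridianPotential, intervalIntegral.integral_const_mul]
    _ = ∫ θ in 0..π, ∫ t in 0..π, cos (m * t) * (sin θ ^ (m + 1) * p.eval (cos θ) *
          spheroidalDistSq ξ η θ ψ t ^ (-(1 / 2) : ℝ)) := by
        refine intervalIntegral_intervalIntegral_swap
          ((Continuous.continuousOn ?_).integrableOn_compact (isCompact_uIcc.prod isCompact_uIcc)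
            |>.mono_set (prod_mono uIoc_subset_uIcc uIoc_subset_uIcc))
        exact Continuous.mul (by fun_prop) (continuous_meridianPotential_integrand hη)
    _ = ∫ θ in 0..π, sin θ ^ (m + 1) * p.eval (cos θ) *
          ((sinh ξ * sinh η * sin θ * sin ψ) ^ m * ringPotential (2 * m) ξ η θ ψ) := by
        congr 1 with θ
        rw [← integral_cos_mul_spheroidalDistSq_rpow m hη, ← intervalIntegral.integral_const_mul]
        congr 1 with t
        ring
    _ = (sinh ξ * sinh η * sin ψ) ^ m * surfacePotential (2 * m) ξ p η ψ := by
        rw [surfacePotential, ← intervalIntegral.integral_const_mul]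
        congr 1 with θ
        ring

lemma integral_comp_sub_mul_cexp_of_periodic {f : ℝ → ℂ} (hf : f.Periodic (2 * π)) (m : ℕ) (φ : ℝ) :
    ∫ t in 0..2 * π, f (t - φ) * Complex.exp (I * m * t) =
      (∫ t in (-π)..π, f t * Complex.exp (I * m * t)) * Complex.exp (I * m * φ) := by
  set g : ℝ → ℂ := fun t => f t * Complex.exp (I * m * t) with hg
  have hshift : ∀ t : ℝ,
      f (t - φ) * Complex.exp (I * m * t) = g (t - φ) * Complex.exp (I * m * φ) := by
    intro t
    simp only [hg]
    rw [mul_assoc (f _), ← Complex.exp_add]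
    push_cast
    ring_nf
  have hper : g.Periodic (2 * π) := by
    intro t
    have hexp : I * m * ((t + 2 * π : ℝ) : ℂ) = I * m * t + m * (2 * π * I) := by
      push_cast
      ring
    simp only [hg, hf t, hexp, Complex.exp_add, exp_nat_mul_two_pi_mul_I, mul_one]
  calc ∫ t in 0..2 * π, f (t - φ) * Complex.exp (I * m * t)
      = (∫ t in (-φ)..(-φ + 2 * π), g t) * Complex.exp (I * m * φ) := by
        simp only [hshift]
        rw [intervalIntegral.integral_mul_const, intervalIntegral.integral_comp_sub_right]
        ring_nf
    _ = (∫ t in (-π)..π, g t) * Complex.exp (I * m * φ) := by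
        rw [hper.intervalIntegral_add_eq (-φ) (-π)]
        ring_nf

lemma integral_mul_cexp_of_even {f : ℝ → ℝ} (hf : Continuous f) (heven : f.Even) (m : ℕ) :
    ∫ t in (-π)..π, (f t : ℂ) * Complex.exp (I * m * t) =
      ((2 * ∫ t in 0..π, cos (m * t) * f t : ℝ) : ℂ) := by
  set g : ℝ → ℂ := fun t => (f t : ℂ) * Complex.exp (I * m * t) with hg
  have hcont : Continuous g := by fun_prop
  have hneg : Continuous fun t => g (-t) := hcont.comp continuous_neg
  have hadd : ∀ t, g (-t) + g t = ((2 * (cos (m * t) * f t) : ℝ) : ℂ) := by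
    intro t
    simp only [hg, heven t]
    push_cast
    rw [Complex.cos]
    ring_nf
  calc ∫ t in (-π)..π, g t
      = ∫ t in 0..π, (g (-t) + g t) := by
        rw [intervalIntegral.integral_add (hneg.intervalIntegrable _ _)
          (hcont.intervalIntegrable _ _), intervalIntegral.integral_comp_neg, neg_zero,
          intervalIntegral.integral_add_adjacent_intervals (hcont.intervalIntegrable _ _)
          (hcont.intervalIntegrable _ _)]
    _ = _ := by
        simp only [hadd, intervalIntegral.integral_ofReal, intervalIntegral.integral_const_mul]

theorem integral_meridianPotential_mul_cexp (hη : |η| < ξ) (m : ℕ) (p : ℝ[X]) (ψ φ : ℝ) :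
    ∫ t in 0..2 * π, (meridianPotential m ξ p η ψ (t - φ) : ℂ) * Complex.exp (I * m * t) =
      ((2 * ((sinh ξ * sinh η * sin ψ) ^ m * surfacePotential (2 * m) ξ p η ψ) : ℝ) : ℂ) *
        Complex.exp (I * m * φ) := by
  have hper : (fun t => (meridianPotential m ξ p η ψ t : ℂ)).Periodic (2 * π) := fun t => by
    simp only [meridianPotential, spheroidalDistSq, Real.cos_add_two_pi]
  have heven : (meridianPotential m ξ p η ψ).Even := fun t => by
    simp only [meridianPotential, spheroidalDistSq, Real.cos_neg]
  rw [integral_comp_sub_mul_cexp_of_periodic hper,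
    integral_mul_cexp_of_even (continuous_meridianPotential hη) heven,
    integral_cos_mul_meridianPotential hη]

end AzimuthalModes

section SingleLayer

open Polynomial Set
open Complex (I)

variable {m n : ℕ} {a ξ η θ ψ φ t : ℝ}

lemma sqrt_cosh_sq_sub_one (hη : 0 ≤ η) : √(cosh η ^ 2 - 1) = sinh η := by
  rw [← sinh_sq, sqrt_sq (sinh_nonneg_iff.2 hη)]

lemma sqrt_one_sub_cos_sq (hθ : θ ∈ Icc 0 π) : √(1 - cos θ ^ 2) = sin θ := by
  rw [← sin_sq, sqrt_sq (sin_nonneg_of_mem_Icc hθ)]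

lemma norm_prolate_sub_prolate (ha : 0 ≤ a) (hξ : 0 ≤ ξ) (hη : 0 ≤ η) (hθ : θ ∈ Icc 0 π)
    (hψ : ψ ∈ Icc 0 π) :
    ‖prolate a (cosh η) (cos ψ) φ - prolate a (cosh ξ) (cos θ) t‖ =
      a * √(spheroidalDistSq ξ η θ ψ (t - φ)) := by
  rw [EuclideanSpace.norm_eq, ← sqrt_sq ha, ← sqrt_mul (sq_nonneg a), sqrt_sq ha]
  congr 1
  simp only [prolate, Fin.sum_univ_three, Real.norm_eq_abs, sq_abs, PiLp.sub_apply,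
    WithLp.equiv_symm_apply, Matrix.cons_val, sqrt_cosh_sq_sub_one hξ, sqrt_cosh_sq_sub_one hη,
    sqrt_one_sub_cos_sq hθ, sqrt_one_sub_cos_sq hψ, spheroidalDistSq, cos_sub]
  grind [cosh_sq ξ, cosh_sq η, sin_sq_add_cos_sq θ, sin_sq_add_cos_sq ψ, sin_sq_add_cos_sq t,
    sin_sq_add_cos_sq φ]

lemma integral_meridian_eq_meridianPotential (m : ℕ) (p : ℝ[X]) (ha : 0 < a) (hη₀ : 0 ≤ η)
    (hη : η < ξ) (hψ : ψ ∈ Icc 0 π) (φ t : ℝ) :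
    ∫ s in (-1)..1, ((areaElemP a (cosh ξ) s /
        (4 * π * ‖prolate a (cosh η) (cos ψ) φ - prolate a (cosh ξ) s t‖) : ℝ) : ℂ) *
        (((√(1 - s ^ 2) ^ m * p.eval s : ℝ) : ℂ) * Complex.exp (I * m * t) /
          (√(cosh ξ ^ 2 - s ^ 2) : ℝ)) =
      ((a * sinh ξ / (4 * π) : ℝ) : ℂ) *
        ((meridianPotential m ξ p η ψ (t - φ) : ℂ) * Complex.exp (I * m * t)) := by
  have hξ : 0 < ξ := hη₀.trans_lt hη
  rw [integral_neg_one_one_eq_integral_cos, meridianPotential, ← intervalIntegral.integral_ofReal,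
    ← intervalIntegral.integral_mul_const, ← intervalIntegral.integral_const_mul]
  refine intervalIntegral.integral_congr fun θ hθ => ?_
  rw [uIcc_of_le pi_pos.le] at hθ
  have hD : 0 < spheroidalDistSq ξ η θ ψ (t - φ) :=
    spheroidalDistSq_pos (by rwa [abs_of_nonneg hη₀])
  have hJ : 0 < √(cosh ξ ^ 2 - cos θ ^ 2) := by
    refine sqrt_pos.2 (sub_pos.2 ((cos_sq_le_one θ).trans_lt ?_))
    exact one_lt_pow₀ (one_lt_cosh.2 hξ.ne') two_ne_zero
  simp only [areaElemP, norm_prolate_sub_prolate ha.le hξ.le hη₀ hθ hψ, sqrt_cosh_sq_sub_one hξ.le,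
    sqrt_one_sub_cos_sq hθ, rpow_neg hD.le, ← sqrt_eq_rpow, Complex.real_smul]
  have hJ' := Complex.ofReal_ne_zero.2 hJ.ne'
  have hD' := Complex.ofReal_ne_zero.2 (sqrt_pos.2 hD).ne'
  have ha' := Complex.ofReal_ne_zero.2 ha.ne'
  push_cast
  field_simp
  ring

theorem singleLayerP_polynomial_mode (m : ℕ) (p : ℝ[X]) (ha : 0 < a) (hη₀ : 0 ≤ η) (hη : η < ξ)
    (hψ : ψ ∈ Icc 0 π) (φ : ℝ) :
    singleLayerP a (cosh ξ) (fun s t => ((√(1 - s ^ 2) ^ m * p.eval s : ℝ) : ℂ) *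
        Complex.exp (I * m * t) / (√(cosh ξ ^ 2 - s ^ 2) : ℝ)) (prolate a (cosh η) (cos ψ) φ) =
      ((a * sinh ξ / (2 * π) * ((sinh ξ * sinh η * sin ψ) ^ m *
        surfacePotential (2 * m) ξ p η ψ) : ℝ) : ℂ) * Complex.exp (I * m * φ) := by
  simp only [singleLayerP, integral_meridian_eq_meridianPotential m p ha hη₀ hη hψ]
  rw [intervalIntegral.integral_const_mul,
    integral_meridianPotential_mul_cexp (by rwa [abs_of_nonneg hη₀])]
  push_cast
  ring

lemma sphY_div_eq (n m : ℕ) (s t : ℝ) (c : ℂ) :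
    sphY n m s t / c =
      ((√((2 * n + 1) / (4 * π)) * √((n - m).factorial / (n + m).factorial) : ℝ) : ℂ) *
        (((√(1 - s ^ 2) ^ m * (derivative^[m] (legendrePoly n)).eval s : ℝ) : ℂ) *
          Complex.exp (I * m * t) / c) := by
  simp only [sphY, ferrersP, iteratedDeriv_legendreP]
  push_cast
  ring

lemma singleLayerP_const_mul (a u₀ : ℝ) (c : ℂ) (σ : ℝ → ℝ → ℂ) (x : EuclideanSpace ℝ (Fin 3)) :
    singleLayerP a u₀ (fun s t => c * σ s t) x = c * singleLayerP a u₀ σ x := by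
  simp only [singleLayerP, mul_left_comm _ c, intervalIntegral.integral_const_mul]

end SingleLayer

theorem singleLayer_interior_eval (a : ℝ) (ha : 0 < a) (u₀ : ℝ) (hu₀ : 1 < u₀)
    (n m : ℕ) (hm : m ≤ n) (u v φ : ℝ) (hu1 : 1 < u) (hu2 : u < u₀)
    (hv : v ∈ Set.Ioo (-1 : ℝ) 1) :
    singleLayerP a u₀ (fun s t => sphY n m s t / ((Real.sqrt (u₀ ^ 2 - s ^ 2) : ℝ) : ℂ))
        (prolate a u v φ) =
      ((a * (((n - m).factorial : ℝ) / ((n + m).factorial : ℝ)) * (-1 : ℝ) ^ m *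
          Real.sqrt (u₀ ^ 2 - 1) * assocQ n m u₀ * assocP n m u : ℝ) : ℂ) * sphY n m v φ := by
  obtain ⟨ξ, hξ, rfl⟩ : ∃ ξ, 0 < ξ ∧ cosh ξ = u₀ :=
    ⟨arcosh u₀, arcosh_pos hu₀, cosh_arcosh hu₀.le⟩
  obtain ⟨η, hη, rfl⟩ : ∃ η, 0 < η ∧ cosh η = u := ⟨arcosh u, arcosh_pos hu1, cosh_arcosh hu1.le⟩
  obtain ⟨ψ, hψ, rfl⟩ : ∃ ψ, ψ ∈ Set.Ioo 0 π ∧ cos ψ = v :=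
    ⟨arccos v, ⟨arccos_pos.2 hv.2, arccos_lt_pi.2 hv.1⟩, cos_arccos hv.1.le hv.2.le⟩
  have hηξ : η < ξ := by rwa [cosh_lt_cosh, abs_of_pos hη, abs_of_pos hξ] at hu2
  simp only [sphY_div_eq]
  rw [singleLayerP_const_mul,
    singleLayerP_polynomial_mode m _ ha hη.le hηξ ⟨hψ.1.le, hψ.2.le⟩,
    surfacePotential_iterate_derivative_legendrePoly hm hη hηξ ⟨hψ.1.le, hψ.2⟩]
  simp only [sphY, ferrersP, assocP, assocQ, iteratedDeriv_legendreP, sqrt_cosh_sq_sub_one hξ.le,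
    sqrt_cosh_sq_sub_one hη.le, sqrt_one_sub_cos_sq ⟨hψ.1.le, hψ.2.le⟩]
  simp only [← mul_assoc, ← Complex.ofReal_mul]
  congr 2
  field_simp
  ring
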